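/- arXiv:2106.01281 — 2 statements merged into one kernel-verified Lean document; each statement's English description precedes it below -/
import Mathlib

section
/- Let C ⊂ X be nonempty, convex, σ(X, X*)-closed, and law invariant. If there exists a nonzero Z ∈ C^∞ with E[Z] = 0, then every Y ∈ X* with σ_C(Y) < ∞ is P-a.s. constant, and C = {X ∈ X : −σ_C(−1) ≤ E[X] ≤ σ_C(1)}. -/
/-!
Let `Y ∈ 𝒳*` be bounded above on `C` and suppose it is not a.s. constant. Fix `U ∈ C`; then
`U + n Z ∈ C` for all `n`. As `Z` is nonzero with mean zero, there are events `A ⊆ {Y > E[Y]}` and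
`D ⊆ {Z > 0}` of a common probability `p ∈ (0, 1)` (Sierpiński's theorem,
`IsAtomless.exists_subset_measureReal_eq`). Rearrange `V = U + n Z` so that its law on `D` is
transported to `A` and its law on `Dᶜ` to `Aᶜ`, in such a way that the rearrangement `V'` satisfies
`E[V' Y] ≥ E[V; D] E[Y; A] / p + E[V; Dᶜ] E[Y; Aᶜ] / (1 - p)` (`IsAtomless.exists_rearrangement`).
By law invariance `V' ∈ C`, while the right-hand side is affine in `n` with slope
`E[Z; D] (E[Y; A] / p - E[Y; Aᶜ] / (1 - p)) > 0`. This contradicts boundedness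
(`ae_const_of_bounded`).

No comonotone rearrangement is needed for the block estimate. An atomless probability space carries
a uniform variable `T` with values in the circle (`IsAtomless.exists_uniform`), so a given law can
be realised by `G (s + T)` for every rotation `s`. By Fubini and rotation invariance, `E[G (s + T) Y]`
averages over `s` to `E[G] E[Y]`, so some `s` reaches at least this value
(`IsAtomless.exists_map_eq_and_le`).

The description of `C` follows by Hahn–Banach (`exists_separation`): a point outside `C` is strictly
separated from it by some `Y ∈ 𝒳*`, which is constant by the above, so the separation only involves
the expectation.
-/

open MeasureTheory Set List
open scoped ENNReal NNReal

noncomputable section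

namespace Collapse

variable {Ω : Type*} [MeasurableSpace Ω]

/-- A measure is atomless (nonatomic) if every set of positive measure contains a
measurable subset of strictly smaller positive measure. -/
def IsAtomless (P : Measure Ω) : Prop :=
  ∀ A : Set Ω, MeasurableSet A → 0 < P A →
    ∃ B : Set Ω, MeasurableSet B ∧ B ⊆ A ∧ 0 < P B ∧ P B < P A

/-- `X` and `Y` have the same law under `P`. -/
def SameLaw (P : Measure Ω) (X Y : Ω → ℝ) : Prop :=
  Measure.map X P = Measure.map Y P

/-- `X` is not `P`-a.s. equal to a constant. -/
def Nonconstant (P : Measure Ω) (X : Ω → ℝ) : Prop :=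
  ∀ c : ℝ, ¬ X =ᵐ[P] (fun _ => c)

/-- `X` and `Y` are comonotone:
`P(X ≤ x, Y ≤ y) = min (P(X ≤ x)) (P(Y ≤ y))` for all `x y`. -/
def Comonotone (P : Measure Ω) (X Y : Ω → ℝ) : Prop :=
  ∀ x y : ℝ,
    P ({ω | X ω ≤ x} ∩ {ω | Y ω ≤ y}) = min (P {ω | X ω ≤ x}) (P {ω | Y ω ≤ y})

/-- `X` and `Y` are antimonotone:
`P(X ≤ x, Y ≤ y) = max (P(X ≤ x) + P(Y ≤ y) - 1) 0` for all `x y`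
(in `ℝ≥0∞`, truncated subtraction realises the `max` with `0`). -/
def Antimonotone (P : Measure Ω) (X Y : Ω → ℝ) : Prop :=
  ∀ x y : ℝ,
    P ({ω | X ω ≤ x} ∩ {ω | Y ω ≤ y}) = (P {ω | X ω ≤ x} + P {ω | Y ω ≤ y}) - 1

/-- `q` is a quantile function of `X` under `P`. -/
def IsQuantile (P : Measure Ω) (X : Ω → ℝ) (q : ℝ → ℝ) : Prop :=
  ∀ s ∈ Set.Ioo (0:ℝ) 1,
    sInf {x : ℝ | s ≤ (P {ω | X ω ≤ x}).toReal} ≤ q s ∧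
    q s ≤ sInf {x : ℝ | s < (P {ω | X ω ≤ x}).toReal}

/-- `X` belongs to `L^∞(P)`: measurable and essentially bounded. -/
def MemLinf (P : Measure Ω) (X : Ω → ℝ) : Prop :=
  Measurable X ∧ ∃ M : ℝ, ∀ᵐ ω ∂P, |X ω| ≤ M

/-- A pair `(𝒳, 𝒳*)` of law-invariant vector subspaces of `L¹(P)` containing `L^∞(P)`
such that `X * Y ∈ L¹(P)` for all `X ∈ 𝒳`, `Y ∈ 𝒳*` (Assumption 2.1). -/
structure PairedSpaces (P : Measure Ω) where
  carrier : Set (Ω → ℝ)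
  dual : Set (Ω → ℝ)
  meas_carrier : ∀ X ∈ carrier, Measurable X
  meas_dual : ∀ Y ∈ dual, Measurable Y
  int_carrier : ∀ X ∈ carrier, Integrable X P
  int_dual : ∀ Y ∈ dual, Integrable Y P
  smul_carrier : ∀ X ∈ carrier, ∀ c : ℝ, (fun ω => c * X ω) ∈ carrier
  add_carrier : ∀ X ∈ carrier, ∀ X' ∈ carrier, (fun ω => X ω + X' ω) ∈ carrier
  smul_dual : ∀ Y ∈ dual, ∀ c : ℝ, (fun ω => c * Y ω) ∈ dual
  add_dual : ∀ Y ∈ dual, ∀ Y' ∈ dual, (fun ω => Y ω + Y' ω) ∈ dual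
  linf_carrier : ∀ X : Ω → ℝ, MemLinf P X → X ∈ carrier
  linf_dual : ∀ Y : Ω → ℝ, MemLinf P Y → Y ∈ dual
  lawinv_carrier : ∀ X ∈ carrier, ∀ X' : Ω → ℝ, Measurable X' → SameLaw P X' X → X' ∈ carrier
  lawinv_dual : ∀ Y ∈ dual, ∀ Y' : Ω → ℝ, Measurable Y' → SameLaw P Y' Y → Y' ∈ dual
  mul_int : ∀ X ∈ carrier, ∀ Y ∈ dual, Integrable (fun ω => X ω * Y ω) P

/-- A subset `C` of `𝒳` is closed in the weak topology `σ(𝒳, 𝒳*)`, i.e. the topology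
on `𝒳` induced by the linear functionals `X ↦ E[X Y]`, `Y ∈ 𝒳*`. -/
def WeakClosed (P : Measure Ω) (pr : PairedSpaces P) (C : Set (Ω → ℝ)) : Prop :=
  @IsClosed ↥pr.carrier
    (TopologicalSpace.induced
      (fun X : ↥pr.carrier => (fun Y : ↥pr.dual => ∫ ω, (X : Ω → ℝ) ω * (Y : Ω → ℝ) ω ∂P))
      Pi.topologicalSpace)
    {X : ↥pr.carrier | (X : Ω → ℝ) ∈ C}

/-- `φ` is `σ(𝒳, 𝒳*)`-lower semicontinuous: every sublevel set is `σ(𝒳, 𝒳*)`-closed. -/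
def WeakLSC (P : Measure Ω) (pr : PairedSpaces P) (φ : (Ω → ℝ) → EReal) : Prop :=
  ∀ m : ℝ, WeakClosed P pr {X | X ∈ pr.carrier ∧ φ X ≤ (m : EReal)}

/-- The (upper) support functional `σ_C(Y) = sup_{X ∈ C} E[XY]`. -/
def suppFn (P : Measure Ω) (C : Set (Ω → ℝ)) (Y : Ω → ℝ) : EReal :=
  ⨆ X ∈ C, ((∫ ω, X ω * Y ω ∂P : ℝ) : EReal)

/-- The conjugate functional `φ*(Y) = sup_{X ∈ 𝒳} (E[XY] - φ(X))`. -/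
def conj (P : Measure Ω) (𝒳 : Set (Ω → ℝ)) (φ : (Ω → ℝ) → EReal) (Y : Ω → ℝ) : EReal :=
  ⨆ X ∈ 𝒳, (((∫ ω, X ω * Y ω ∂P : ℝ) : EReal) - φ X)

/-- The recession cone `C^∞ = {X ∈ 𝒳 : {X} + C ⊆ C}`. -/
def recCone (𝒳 C : Set (Ω → ℝ)) : Set (Ω → ℝ) :=
  {X | X ∈ 𝒳 ∧ ∀ U ∈ C, (fun ω => X ω + U ω) ∈ C}

/-- A functional on `𝒳` is law invariant. -/
def LawInvariantFn (P : Measure Ω) (𝒳 : Set (Ω → ℝ)) (φ : (Ω → ℝ) → EReal) : Prop :=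
  ∀ X ∈ 𝒳, ∀ Y ∈ 𝒳, SameLaw P X Y → φ X = φ Y

/-- A set of random variables is law invariant. -/
def LawInvariantSet (P : Measure Ω) (C : Set (Ω → ℝ)) : Prop :=
  ∀ X ∈ C, ∀ Y : Ω → ℝ, Measurable Y → SameLaw P Y X → Y ∈ C

/-- A functional on `𝒳` is expectation invariant. -/
def ExpectationInvariantFn (P : Measure Ω) (𝒳 : Set (Ω → ℝ)) (φ : (Ω → ℝ) → EReal) : Prop :=
  ∀ X ∈ 𝒳, ∀ Y ∈ 𝒳, (∫ ω, X ω ∂P) = (∫ ω, Y ω ∂P) → φ X = φ Y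

/-- Convexity of a functional `φ : 𝒳 → (-∞, ∞]`. -/
def ConvexFn (𝒳 : Set (Ω → ℝ)) (φ : (Ω → ℝ) → EReal) : Prop :=
  ∀ X ∈ 𝒳, ∀ Y ∈ 𝒳, ∀ l : ℝ, l ∈ Set.Icc (0:ℝ) 1 →
    φ (fun ω => l * X ω + (1 - l) * Y ω) ≤ (l : EReal) * φ X + ((1 - l : ℝ) : EReal) * φ Y

/-- Quasiconvexity of a functional `φ : 𝒳 → (-∞, ∞]`. -/
def QuasiconvexFn (𝒳 : Set (Ω → ℝ)) (φ : (Ω → ℝ) → EReal) : Prop :=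
  ∀ X ∈ 𝒳, ∀ Y ∈ 𝒳, ∀ l : ℝ, l ∈ Set.Icc (0:ℝ) 1 →
    φ (fun ω => l * X ω + (1 - l) * Y ω) ≤ max (φ X) (φ Y)

/-- Convexity of a set of random variables. -/
def ConvexSet (C : Set (Ω → ℝ)) : Prop :=
  ∀ X ∈ C, ∀ Y ∈ C, ∀ l : ℝ, l ∈ Set.Icc (0:ℝ) 1 →
    (fun ω => l * X ω + (1 - l) * Y ω) ∈ C

/-- The expectation of `Z` as an extended real number,
`E[Z] = ∫ Z⁺ dP - ∫ Z⁻ dP` computed in `EReal`. -/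
def eExp (P : Measure Ω) (Z : Ω → ℝ) : EReal :=
  ((∫⁻ ω, ENNReal.ofReal (Z ω) ∂P : ℝ≥0∞) : EReal) -
    ((∫⁻ ω, ENNReal.ofReal (-(Z ω)) ∂P : ℝ≥0∞) : EReal)

/-- `X` dominates `Y` in the increasing convex (second-order stochastic dominance) sense:
`E[f(X)] ≥ E[f(Y)]` for every nondecreasing convex `f : ℝ → ℝ`. -/
def SSDdom (P : Measure Ω) (X Y : Ω → ℝ) : Prop :=
  ∀ f : ℝ → ℝ, Monotone f → ConvexOn ℝ Set.univ f →
    eExp P (fun ω => f (Y ω)) ≤ eExp P (fun ω => f (X ω))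

/-- A consistent risk measure on `𝒳`: a proper, cash-additive, normalised functional
that is consistent with second-order stochastic dominance. -/
def IsConsistentRM (P : Measure Ω) (𝒳 : Set (Ω → ℝ)) (φ : (Ω → ℝ) → EReal) : Prop :=
  (∀ X ∈ 𝒳, φ X ≠ (⊥ : EReal)) ∧
  (∃ X ∈ 𝒳, φ X ≠ (⊤ : EReal)) ∧
  (∀ X ∈ 𝒳, ∀ m : ℝ, φ (fun ω => X ω + m) = φ X + (m : EReal)) ∧
  (∀ X ∈ 𝒳, ∀ Y ∈ 𝒳, SSDdom P X Y → φ Y ≤ φ X) ∧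
  φ (fun _ => (0:ℝ)) = (0 : EReal)

/-- A capacity on `(Ω, F)`. -/
structure Capacity (Ω : Type*) [MeasurableSpace Ω] where
  toFun : Set Ω → ℝ
  empty' : toFun ∅ = 0
  univ' : toFun Set.univ = 1
  mono' : ∀ ⦃A B : Set Ω⦄, MeasurableSet A → MeasurableSet B → A ⊆ B → toFun A ≤ toFun B
  nonneg' : ∀ A : Set Ω, MeasurableSet A → 0 ≤ toFun A
  le_one' : ∀ A : Set Ω, MeasurableSet A → toFun A ≤ 1

/-- A capacity is coherent if it is the upper envelope of a family of probability measures. -/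
def Capacity.Coherent (ν : Capacity Ω) : Prop :=
  ∃ Q : Set (Measure Ω), Q.Nonempty ∧ (∀ m ∈ Q, IsProbabilityMeasure m) ∧
    ∀ A : Set Ω, MeasurableSet A → ν.toFun A = ⨆ m ∈ Q, (m A).toReal

/-- A capacity is law invariant (with respect to `P`). -/
def Capacity.LawInvariant (P : Measure Ω) (μ : Capacity Ω) : Prop :=
  ∀ A B : Set Ω, MeasurableSet A → MeasurableSet B → P A = P B → μ.toFun A = μ.toFun B

/-- `μ` is the Jaffray-Philippe capacity represented by the pair `(ν, α)`:
`μ = α ν + (1 - α) ν̄` with `ν` coherent and `α ∈ [0,1]`,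
where `ν̄(A) = 1 - ν(Aᶜ)` is the dual capacity. -/
def IsJPRep (μ ν : Capacity Ω) (α : ℝ) : Prop :=
  ν.Coherent ∧ α ∈ Set.Icc (0:ℝ) 1 ∧
    ∀ A : Set Ω, MeasurableSet A → μ.toFun A = α * ν.toFun A + (1 - α) * (1 - ν.toFun Aᶜ)

/-- The Choquet integral `E_μ[X] = ∫_{-∞}^0 (μ(X > s) - 1) ds + ∫_0^∞ μ(X > s) ds`. -/
def choquet (μ : Capacity Ω) (X : Ω → ℝ) : ℝ :=
  (∫ s in Set.Iio (0:ℝ), (μ.toFun {ω | s < X ω} - 1)) +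
    ∫ s in Set.Ici (0:ℝ), μ.toFun {ω | s < X ω}

/-- `X` is an optimal solution of: maximise `φ` over `C` subject to `E[D X] = p`. -/
def IsOptimal (P : Measure Ω) (φ : (Ω → ℝ) → EReal) (C : Set (Ω → ℝ)) (D : Ω → ℝ)
    (p : ℝ) (X : Ω → ℝ) : Prop :=
  X ∈ C ∧ (∫ ω, D ω * X ω ∂P) = p ∧
    ∀ X' ∈ C, (∫ ω, D ω * X' ω ∂P) = p → φ X' ≤ φ X

/-- A set of random variables is increasing. -/
def IncreasingSet (C : Set (Ω → ℝ)) : Prop :=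
  ∀ X ∈ C, ∀ m : ℝ, 0 ≤ m → (fun ω => X ω + m) ∈ C

/-- `φ` is weakly increasing: `φ(X + m) ≥ φ(X)` for `m ≥ 0`. -/
def WeaklyIncreasingFn (𝒳 : Set (Ω → ℝ)) (φ : (Ω → ℝ) → EReal) : Prop :=
  ∀ X ∈ 𝒳, ∀ m : ℝ, 0 ≤ m → φ X ≤ φ (fun ω => X ω + m)

/-- `φ` is increasing: `φ(X + m) > φ(X)` whenever `φ(X) ∈ ℝ` and `m > 0`. -/
def IncreasingFn (𝒳 : Set (Ω → ℝ)) (φ : (Ω → ℝ) → EReal) : Prop :=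
  ∀ X ∈ 𝒳, (φ X ≠ (⊤ : EReal) ∧ φ X ≠ (⊥ : EReal)) → ∀ m : ℝ, 0 < m →
    φ X < φ (fun ω => X ω + m)

/-! ### Sierpiński's theorem -/

lemma IsAtomless.exists_small {μ : Measure Ω} [IsFiniteMeasure μ] (hμ : IsAtomless μ)
    {A : Set Ω} (hA : MeasurableSet A) (hpos : 0 < μ.real A) (n : ℕ) :
    ∃ B, MeasurableSet B ∧ B ⊆ A ∧ 0 < μ.real B ∧ μ.real B ≤ μ.real A / 2 ^ n := by
  induction n with
  | zero => exact ⟨A, hA, subset_rfl, hpos, by simp⟩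
  | succ n ih =>
    obtain ⟨B, hB, hBA, hB0, hBn⟩ := ih
    obtain ⟨D, hD, hDB, hD0, hD1⟩ := hμ B hB (by
      simpa [Measure.real, ENNReal.toReal_pos_iff, measure_lt_top] using hB0)
    have hd0 : 0 < μ.real D := ENNReal.toReal_pos hD0.ne' (measure_ne_top _ _)
    have hd1 : μ.real D < μ.real B :=
      (ENNReal.toReal_lt_toReal (measure_ne_top _ _) (measure_ne_top _ _)).2 hD1
    have hdiff : μ.real (B \ D) = μ.real B - μ.real D := measureReal_sdiff hDB hD
    have hn : μ.real A / 2 ^ (n + 1) = (μ.real A / 2 ^ n) / 2 := by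
      rw [pow_succ]; field_simp
    -- one of the two pieces has at most half the mass
    by_cases h : μ.real D ≤ μ.real B / 2
    · exact ⟨D, hD, hDB.trans hBA, hd0, by linarith⟩
    · exact ⟨B \ D, hB.diff hD, sdiff_subset.trans hBA, by linarith, by linarith⟩

/-- Sierpiński's theorem: a finite atomless measure takes all intermediate values. The subset is
built greedily, each step adding at least half of the mass that can still be added; by
`IsAtomless.exists_small` the union cannot fall short of `c`. -/
lemma IsAtomless.exists_subset_measureReal_eq {μ : Measure Ω} [IsFiniteMeasure μ]
    (hμ : IsAtomless μ) {A : Set Ω} (hA : MeasurableSet A) {c : ℝ} (hc0 : 0 ≤ c)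
    (hcA : c ≤ μ.real A) :
    ∃ B, MeasurableSet B ∧ B ⊆ A ∧ μ.real B = c := by
  classical
  let K : Set (Set Ω) := {B | MeasurableSet B ∧ B ⊆ A ∧ μ.real B ≤ c}
  have step : ∀ B : K, ∃ B' : K, (B : Set Ω) ⊆ B' ∧
      ∀ B'' ∈ K, (B : Set Ω) ⊆ B'' → μ.real B'' + μ.real (B : Set Ω) ≤ 2 * μ.real (B' : Set Ω) := by
    rintro ⟨B, hB⟩
    let S : Set ℝ := (fun B'' => μ.real B'') '' {B'' | B'' ∈ K ∧ B ⊆ B''}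
    have hSb : BddAbove S := ⟨c, by rintro _ ⟨D, ⟨hD, -⟩, rfl⟩; exact hD.2.2⟩
    have hBS : μ.real B ∈ S := ⟨B, ⟨hB, subset_rfl⟩, rfl⟩
    have hle : μ.real B ≤ sSup S := le_csSup hSb hBS
    rcases hle.eq_or_lt with h | h
    · refine ⟨⟨B, hB⟩, subset_rfl, fun B'' h1 h2 => ?_⟩
      have := le_csSup hSb (show μ.real B'' ∈ S from ⟨B'', ⟨h1, h2⟩, rfl⟩)
      simp only; linarith
    · obtain ⟨_, ⟨D, ⟨hD, hBD⟩, rfl⟩, hlt⟩ := exists_lt_of_lt_csSup ⟨_, hBS⟩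
        (show (μ.real B + sSup S) / 2 < sSup S by linarith)
      refine ⟨⟨D, hD⟩, hBD, fun B'' h1 h2 => ?_⟩
      have := le_csSup hSb (show μ.real B'' ∈ S from ⟨B'', ⟨h1, h2⟩, rfl⟩)
      simp only at hlt ⊢; linarith
  choose f hf1 hf2 using step
  let s : ℕ → K := fun n => f^[n] ⟨∅, MeasurableSet.empty, empty_subset _, by simpa using hc0⟩
  have hs : ∀ n, s (n + 1) = f (s n) := fun n => Function.iterate_succ_apply' f n _
  have hmono : Monotone (fun n => (s n : Set Ω)) :=
    monotone_nat_of_le_succ fun n => by rw [hs]; exact hf1 _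
  let B : Set Ω := ⋃ n, (s n : Set Ω)
  have hBm : MeasurableSet B := MeasurableSet.iUnion fun n => (s n).2.1
  have hBA : B ⊆ A := iUnion_subset fun n => (s n).2.2.1
  have hlim : Filter.Tendsto (fun n => μ.real (s n : Set Ω)) Filter.atTop (nhds (μ.real B)) :=
    (ENNReal.tendsto_toReal (measure_ne_top _ _)).comp (tendsto_measure_iUnion_atTop hmono)
  have hBc : μ.real B ≤ c := le_of_tendsto' hlim fun n => (s n).2.2.2
  refine ⟨B, hBm, hBA, ?_⟩
  by_contra hne
  have hlt : μ.real B < c := lt_of_le_of_ne hBc hne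
  have hdiff : μ.real (A \ B) = μ.real A - μ.real B := measureReal_sdiff hBA hBm
  obtain ⟨n, hn⟩ : ∃ n : ℕ, μ.real (A \ B) / 2 ^ n < c - μ.real B := by
    obtain ⟨n, hn⟩ := pow_unbounded_of_one_lt (μ.real (A \ B) / (c - μ.real B))
      (one_lt_two (α := ℝ))
    refine ⟨n, ?_⟩
    rw [div_lt_iff₀ (by linarith)] at hn
    rw [div_lt_iff₀ (by positivity)]
    linarith
  obtain ⟨E, hE, hEA, hE0, hEn⟩ := hμ.exists_small (hA.diff hBm) (by linarith) n
  have hun : μ.real (B ∪ E) = μ.real B + μ.real E :=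
    measureReal_union (disjoint_sdiff_right.mono_right hEA) hE
  have hBEK : B ∪ E ∈ K :=
    ⟨hBm.union hE, union_subset hBA (hEA.trans sdiff_subset), by linarith⟩
  have key : ∀ n, μ.real (B ∪ E) + μ.real (s n : Set Ω) ≤ 2 * μ.real (s (n + 1) : Set Ω) := by
    intro n
    rw [hs]
    exact hf2 _ _ hBEK ((subset_iUnion (fun n => (s n : Set Ω)) n).trans subset_union_left)
  have := le_of_tendsto_of_tendsto' (hlim.const_add (μ.real (B ∪ E)))
    ((hlim.comp (Filter.tendsto_add_atTop_nat 1)).const_mul 2) key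
  linarith

/-! ### A uniform random variable -/

/-- A dyadic splitting of an atomless probability space: `X n` takes each of the values
`0, …, 2 ^ n - 1` with probability `2 ^ (-n)`, and `X (n + 1)` refines `X n` by one binary digit. -/
lemma IsAtomless.exists_dyadic {μ : Measure Ω} [IsProbabilityMeasure μ] (hμ : IsAtomless μ) :
    ∃ X : ℕ → Ω → ℕ, (∀ n, Measurable (X n)) ∧ (∀ n ω, X n ω < 2 ^ n) ∧
      (∀ n ω, X (n + 1) ω = 2 * X n ω ∨ X (n + 1) ω = 2 * X n ω + 1) ∧
      ∀ n k, k < 2 ^ n → μ.real (X n ⁻¹' {k}) = 1 / 2 ^ n := by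
  classical
  have half : ∀ A : Set Ω, ∃ B : Set Ω, MeasurableSet A →
      MeasurableSet B ∧ B ⊆ A ∧ μ.real B = μ.real A / 2 := by
    intro A
    by_cases hA : MeasurableSet A
    · obtain ⟨B, hB⟩ := hμ.exists_subset_measureReal_eq hA (c := μ.real A / 2) (by positivity)
        (half_le_self measureReal_nonneg)
      exact ⟨B, fun _ => hB⟩
    · exact ⟨∅, fun h => absurd h hA⟩
  choose h hh using half
  let X : ℕ → Ω → ℕ := fun n => Nat.rec (fun _ => 0)
    (fun _ x ω => 2 * x ω + if ω ∈ h (x ⁻¹' {x ω}) then 0 else 1) n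
  have hX0 : X 0 = fun _ => 0 := rfl
  have hXs : ∀ n ω, X (n + 1) ω =
      2 * X n ω + if ω ∈ h (X n ⁻¹' {X n ω}) then 0 else 1 := fun n ω => rfl
  have hor : ∀ n ω, X (n + 1) ω = 2 * X n ω ∨ X (n + 1) ω = 2 * X n ω + 1 := by
    intro n ω
    rw [hXs]
    split_ifs <;> simp
  have hpre : ∀ n, Measurable (X n) → ∀ k,
      X (n + 1) ⁻¹' {2 * k} = h (X n ⁻¹' {k}) ∧
      X (n + 1) ⁻¹' {2 * k + 1} = X n ⁻¹' {k} \ h (X n ⁻¹' {k}) := by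
    intro n hn k
    have hsub := (hh _ (hn (measurableSet_singleton k))).2.1
    constructor
    · ext ω
      simp only [mem_preimage, mem_singleton_iff, hXs]
      constructor
      · intro e
        split_ifs at e with hω
        · have : X n ω = k := by omega
          rwa [this] at hω
        · omega
      · intro hω
        have : X n ω = k := hsub hω
        simp [this, hω]
    · ext ω
      simp only [mem_preimage, mem_singleton_iff, hXs, mem_sdiff]
      constructor
      · intro e
        split_ifs at e with hω
        · omega
        · have : X n ω = k := by omega
          rw [this] at hω
          exact ⟨this, hω⟩
      · rintro ⟨e, hω⟩
        simp [e, hω]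
  have hmeas : ∀ n, Measurable (X n) := by
    intro n
    induction n with
    | zero => rw [hX0]; exact measurable_const
    | succ n ih =>
      refine measurable_to_countable' fun j => ?_
      obtain ⟨k, rfl | rfl⟩ := Nat.even_or_odd' j
      · rw [(hpre n ih k).1]; exact (hh _ (ih (measurableSet_singleton k))).1
      · rw [(hpre n ih k).2]
        exact (ih (measurableSet_singleton k)).diff (hh _ (ih (measurableSet_singleton k))).1
  refine ⟨X, hmeas, fun n ω => ?_, hor, fun n => ?_⟩
  · induction n with
    | zero => simp [hX0]
    | succ n ih => rw [pow_succ]; rcases hor n ω with e | e <;> omega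
  · induction n with
    | zero =>
      intro k hk
      have : k = 0 := by simpa using hk
      subst this
      simp [hX0]
    | succ n ih =>
      intro j hj
      rw [pow_succ] at hj
      obtain ⟨k, rfl | rfl⟩ := Nat.even_or_odd' j
      · obtain ⟨h1, h2, h3⟩ := hh _ (hmeas n (measurableSet_singleton k))
        rw [(hpre n (hmeas n) k).1, h3, ih k (by omega), pow_succ]
        field_simp
      · obtain ⟨h1, h2, h3⟩ := hh _ (hmeas n (measurableSet_singleton k))
        rw [(hpre n (hmeas n) k).2, measureReal_sdiff h2 h1, h3, ih k (by omega), pow_succ]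
        field_simp
        norm_num

/-- An atomless probability space carries a uniformly distributed random variable. -/
lemma IsAtomless.exists_uniform {μ : Measure Ω} [IsProbabilityMeasure μ] (hμ : IsAtomless μ) :
    ∃ T : Ω → ℝ, Measurable T ∧ μ.map T = volume.restrict (Ioc (0 : ℝ) 1) := by
  obtain ⟨X, hXm, hXlt, hXs, hXμ⟩ := hμ.exists_dyadic
  let l : ℕ → Ω → ℝ := fun n ω => (X n ω : ℝ) / 2 ^ n
  have hlmono : ∀ ω, Monotone fun n => l n ω := fun ω => monotone_nat_of_le_succ fun n => by
    have : (2 * X n ω : ℝ) ≤ X (n + 1) ω := by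
      rcases hXs n ω with e | e <;> rw [e] <;> push_cast <;> linarith
    simp only [l]
    rw [div_le_div_iff₀ (by positivity) (by positivity), pow_succ]
    nlinarith [pow_pos (two_pos (α := ℝ)) n]
  have huanti : ∀ ω, Antitone fun n => ((X n ω : ℝ) + 1) / 2 ^ n :=
    fun ω => antitone_nat_of_succ_le fun n => by
      have : (X (n + 1) ω : ℝ) ≤ 2 * X n ω + 1 := by
        rcases hXs n ω with e | e <;> rw [e] <;> push_cast <;> linarith
      rw [div_le_div_iff₀ (by positivity) (by positivity), pow_succ]
      nlinarith [pow_pos (two_pos (α := ℝ)) n]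
  have hlu : ∀ ω n m, l n ω ≤ ((X m ω : ℝ) + 1) / 2 ^ m := by
    intro ω n m
    calc l n ω ≤ l (max n m) ω := hlmono ω (le_max_left _ _)
      _ ≤ ((X (max n m) ω : ℝ) + 1) / 2 ^ (max n m) := by
        simp only [l]; gcongr; linarith
      _ ≤ _ := huanti ω (le_max_right _ _)
  have hbdd : ∀ ω, BddAbove (range fun n => l n ω) :=
    fun ω => ⟨_, by rintro _ ⟨n, rfl⟩; exact hlu ω n 0⟩
  let T : Ω → ℝ := fun ω => ⨆ n, l n ω
  have hTl : ∀ ω n, l n ω ≤ T ω := fun ω n => le_ciSup (hbdd ω) n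
  have hTu : ∀ ω n, T ω ≤ ((X n ω : ℝ) + 1) / 2 ^ n := fun ω n => ciSup_le fun m => hlu ω m n
  have hTm : Measurable T := Measurable.iSup fun n => by
    have := hXm n
    simp only [l]
    fun_prop
  have hX00 : ∀ ω, X 0 ω = 0 := fun ω => by simpa using hXlt 0 ω
  have hT0 : ∀ ω, 0 ≤ T ω := fun ω => by simpa [l, hX00] using hTl ω 0
  have hT1 : ∀ ω, T ω ≤ 1 := fun ω => by simpa [hX00] using hTu ω 0
  have hcount : ∀ n k, k ≤ 2 ^ n → μ.real {ω | X n ω < k} = k / 2 ^ n := by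
    intro n k
    induction k with
    | zero => simp
    | succ k ih =>
      intro hk
      have : {ω | X n ω < k + 1} = {ω | X n ω < k} ∪ X n ⁻¹' {k} := by
        ext ω; simp only [mem_ofPred_eq, mem_union, mem_preimage, mem_singleton_iff]; omega
      rw [this, measureReal_union _ (hXm n (measurableSet_singleton k)), ih (by omega),
        hXμ n k (by omega)]
      · push_cast; ring
      · rw [Set.disjoint_left]
        intro ω h1 h2
        simp at h1 h2; omega
  have hmap : IsProbabilityMeasure (μ.map T) := Measure.isProbabilityMeasure_map hTm.aemeasurable
  have hvol : IsProbabilityMeasure (volume.restrict (Ioc (0 : ℝ) 1)) := ⟨by simp⟩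
  refine ⟨T, hTm, Measure.eq_of_cdf _ _ ?_⟩
  ext x
  rw [ProbabilityTheory.cdf_eq_real, ProbabilityTheory.cdf_eq_real,
    map_measureReal_apply hTm measurableSet_Iic,
    measureReal_restrict_apply measurableSet_Iic]
  rcases lt_or_ge x 0 with hx | hx
  · have h1 : T ⁻¹' Iic x = ∅ := by
      ext ω; simpa using hx.trans_le (hT0 ω)
    have h2 : Iic x ∩ Ioc (0 : ℝ) 1 = ∅ := by
      ext y; simp; intros; linarith
    rw [h1, h2]; simp
  rcases le_or_gt 1 x with hx1 | hx1
  · have h1 : T ⁻¹' Iic x = univ := by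
      ext ω; simpa using (hT1 ω).trans hx1
    have h2 : Iic x ∩ Ioc (0 : ℝ) 1 = Ioc 0 1 := by
      ext y; simp; intros; linarith
    rw [h1, h2]; simp
  have h2 : Iic x ∩ Ioc (0 : ℝ) 1 = Ioc 0 x := by
    ext y; simp; constructor
    · rintro ⟨a, b, c⟩; exact ⟨b, a⟩
    · rintro ⟨a, b⟩; exact ⟨b, a, by linarith⟩
  rw [h2, Real.volume_real_Ioc_of_le hx, sub_zero]
  -- the distribution function at `x` is squeezed between neighbouring dyadic rationals
  have hsq : ∀ n : ℕ, |μ.real (T ⁻¹' Iic x) - x| ≤ (1 / 2) ^ n := by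
    intro n
    have hp : (0 : ℝ) < 2 ^ n := by positivity
    set k := ⌊x * 2 ^ n⌋₊ with hk
    have hk1 : (k : ℝ) ≤ x * 2 ^ n := Nat.floor_le (by positivity)
    have hk2 : x * 2 ^ n < k + 1 := Nat.lt_floor_add_one _
    have hk3 : k < 2 ^ n := by
      have : (k : ℝ) < 2 ^ n := by nlinarith
      exact_mod_cast this
    have hlo : (k : ℝ) / 2 ^ n ≤ μ.real (T ⁻¹' Iic x) := by
      rw [← hcount n k hk3.le]
      refine measureReal_mono fun ω hω => ?_
      have h3 : (X n ω : ℝ) + 1 ≤ k := by exact_mod_cast hω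
      refine (hTu ω n).trans ?_
      rw [div_le_iff₀ hp]; linarith
    have hhi : μ.real (T ⁻¹' Iic x) ≤ ((k + 1 : ℕ) : ℝ) / 2 ^ n := by
      rw [← hcount n (k + 1) hk3]
      refine measureReal_mono fun ω hω => ?_
      have h3 : l n ω ≤ x := (hTl ω n).trans hω
      simp only [l] at h3
      rw [div_le_iff₀ hp] at h3
      have : (X n ω : ℝ) < ((k + 1 : ℕ) : ℝ) := by push_cast; linarith
      exact_mod_cast this
    rw [le_div_iff₀ hp] at hhi
    rw [div_le_iff₀ hp] at hlo
    push_cast at hhi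
    rw [one_div, inv_pow, abs_le]
    constructor
    · rw [neg_le, ← one_div, le_div_iff₀ hp]; linarith
    · rw [← one_div, le_div_iff₀ hp]; linarith
  have hlim : |μ.real (T ⁻¹' Iic x) - x| ≤ 0 :=
    ge_of_tendsto' (tendsto_pow_atTop_nhds_zero_of_lt_one (by norm_num) (by norm_num)) hsq
  exact sub_eq_zero.1 (abs_nonpos_iff.1 hlim)

/-! ### Rearrangements -/

/-- Every Borel probability measure on the line is the law of a function on the circle. -/
lemma exists_circle_map_eq (ν : Measure ℝ) [IsProbabilityMeasure ν] :
    ∃ G : UnitAddCircle → ℝ, Measurable G ∧ (volume : Measure UnitAddCircle).map G = ν := by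
  obtain ⟨f, hf, hfν⟩ := ν.exists_measurable_map_eq
  let g : ℝ → ℝ := fun x => f (projIcc 0 1 zero_le_one x)
  have hg : Measurable g := hf.comp continuous_projIcc.measurable
  have hgν : (volume.restrict (Ioc (0 : ℝ) 1)).map g = ν := by
    rw [restrict_Ioc_eq_restrict_Icc, ← unitInterval.measurePreserving_coe.map_eq,
      Measure.map_map hg measurable_subtype_coe, ← hfν]
    congr 1
    ext x
    simp [g]
  let e : UnitAddCircle → ℝ := fun x => (AddCircle.equivIoc (1 : ℝ) 0 x : ℝ)
  have he : Measurable e :=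
    measurable_subtype_coe.comp (AddCircle.measurableEquivIoc (1 : ℝ) 0).measurable
  refine ⟨g ∘ e, hg.comp he, ?_⟩
  rw [← (UnitAddCircle.measurePreserving_mk 0).map_eq,
    Measure.map_map (hg.comp he) AddCircle.measurable_mk', ← hgν, zero_add]
  refine Measure.map_congr ?_
  filter_upwards [ae_restrict_mem measurableSet_Ioc] with x hx
  have : x ∈ Ioc (0 : ℝ) (0 + 1) := by simpa using hx
  simp [e, AddCircle.equivIoc_coe_eq this]

/-- Any law can be realised by some `V` that is nonnegatively correlated with a given `Y`.
Realise the law as `G ∘ T` with `T` uniform on the circle; the mean of `E[G (s + T) * Y]` over all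
rotations `s` is `E[G] * E[Y]`, so some rotation does at least as well. -/
lemma IsAtomless.exists_map_eq_and_le {μ : Measure Ω} [IsProbabilityMeasure μ]
    (hμ : IsAtomless μ) (ν : Measure ℝ) [IsProbabilityMeasure ν]
    (hν : Integrable (fun x : ℝ => x) ν) {Y : Ω → ℝ} (hY : Integrable Y μ) :
    ∃ V : Ω → ℝ, Measurable V ∧ μ.map V = ν ∧
      (∫ x, x ∂ν) * (∫ ω, Y ω ∂μ) ≤ ∫ ω, V ω * Y ω ∂μ := by
  obtain ⟨T₀, hT₀, hT₀μ⟩ := hμ.exists_uniform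
  obtain ⟨G, hG, hGν⟩ := exists_circle_map_eq ν
  let T : Ω → UnitAddCircle := fun ω => (T₀ ω : UnitAddCircle)
  have hT : Measurable T := AddCircle.measurable_mk'.comp hT₀
  have hTμ : μ.map T = volume := by
    have h := (UnitAddCircle.measurePreserving_mk 0).map_eq
    rw [zero_add, ← hT₀μ, Measure.map_map AddCircle.measurable_mk' hT₀] at h
    exact h
  have hlaw : ∀ s : UnitAddCircle, μ.map (fun ω => G (s + T ω)) = ν := by
    intro s
    have h1 : (fun ω => G (s + T ω)) = (G ∘ fun x => s + x) ∘ T := rfl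
    rw [h1, ← Measure.map_map (hG.comp (measurable_const_add s)) hT, hTμ,
      ← Measure.map_map hG (measurable_const_add s), map_add_left_eq_self, hGν]
  have hGi : Integrable G (volume : Measure UnitAddCircle) := by
    rw [← hGν] at hν
    exact (integrable_map_measure (by fun_prop) hG.aemeasurable).1 hν
  have hGint : ∫ x, G x = ∫ x, x ∂ν := by
    rw [← hGν, integral_map hG.aemeasurable (by fun_prop)]
  -- integrability on the product, via the measure-preserving shear `(ω, s) ↦ (ω, s + T ω)`
  have hshear : MeasurePreserving (fun p : Ω × UnitAddCircle => (p.1, p.2 + T p.1))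
      (μ.prod volume) (μ.prod volume) := by
    refine (MeasurePreserving.id μ).skew_product (g := fun ω s => s + T ω) (by fun_prop) ?_
    exact Filter.Eventually.of_forall fun ω => map_add_right_eq_self volume (T ω)
  have hint : Integrable (fun p : Ω × UnitAddCircle => G (p.2 + T p.1) * Y p.1)
      (μ.prod volume) := by
    have h := (hY.mul_prod hGi)
    have h2 := hshear.integrable_comp_of_integrable h
    refine h2.congr (Filter.Eventually.of_forall fun p => ?_)
    simp [mul_comm]
  have hprob : IsProbabilityMeasure (volume : Measure UnitAddCircle) :=
    ⟨UnitAddCircle.measure_univ⟩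
  obtain ⟨s, hs⟩ := exists_integral_le hint.integral_prod_right
  refine ⟨fun ω => G (s + T ω), by fun_prop, hlaw s, ?_⟩
  refine le_trans (le_of_eq ?_) hs
  have hswap : ∫ s, (∫ ω, G (s + T ω) * Y ω ∂μ) =
      ∫ ω, (∫ s : UnitAddCircle, G (s + T ω) * Y ω) ∂μ :=
    (integral_integral_swap (f := fun ω s => G (s + T ω) * Y ω) hint).symm
  rw [hswap]
  simp_rw [integral_mul_const, integral_add_right_eq_self, hGint]
  rw [integral_const_mul]

lemma IsAtomless.cond {P : Measure Ω} [IsProbabilityMeasure P] (hP : IsAtomless P)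
    {A : Set Ω} (hA : MeasurableSet A) (hA0 : P A ≠ 0) :
    IsAtomless (ProbabilityTheory.cond P A) := by
  intro B hB hB0
  obtain ⟨D, hD, hDB, hD0, hD1⟩ := hP (A ∩ B) (hA.inter hB)
    (ProbabilityTheory.inter_pos_of_cond_ne_zero hA hB0.ne')
  have hAD : A ∩ D = D := inter_eq_right.2 (hDB.trans inter_subset_left)
  refine ⟨D, hD, hDB.trans inter_subset_right, ?_, ?_⟩
  · rw [ProbabilityTheory.cond_apply hA, hAD]
    exact ENNReal.mul_pos (ENNReal.inv_ne_zero.2 (measure_ne_top _ _)) hD0.ne'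
  · rw [ProbabilityTheory.cond_apply hA, ProbabilityTheory.cond_apply hA, hAD]
    exact ENNReal.mul_lt_mul_right (ENNReal.inv_ne_zero.2 (measure_ne_top _ _))
      (ENNReal.inv_ne_top.2 hA0) hD1

/-- The law of `V` on `D` can be realised on a set `A` of the same probability in such a way that
`E[V' Y; A]` is at least what the averages of `V` over `D` and of `Y` over `A` would give. -/
lemma IsAtomless.exists_rearrangement_on {P : Measure Ω} [IsProbabilityMeasure P]
    (hP : IsAtomless P) {A D : Set Ω} (hA : MeasurableSet A) (hAD : P A = P D)
    {V Y : Ω → ℝ} (hVm : Measurable V) (hV : Integrable V P) (hY : Integrable Y P) :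
    ∃ V' : Ω → ℝ, Measurable V' ∧ (P.restrict A).map V' = (P.restrict D).map V ∧
      (∫ ω in D, V ω ∂P) * (∫ ω in A, Y ω ∂P) ≤ P.real A * ∫ ω in A, V' ω * Y ω ∂P := by
  by_cases hA0 : P A = 0
  · have hD0 : P D = 0 := hAD ▸ hA0
    refine ⟨V, hVm, ?_, ?_⟩
    · rw [Measure.restrict_eq_zero.2 hA0, Measure.restrict_eq_zero.2 hD0]
    · rw [Measure.restrict_eq_zero.2 hA0, Measure.restrict_eq_zero.2 hD0]; simp
  have hD0 : P D ≠ 0 := hAD ▸ hA0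
  have hAr : 0 < P.real A := ENNReal.toReal_pos hA0 (measure_ne_top _ _)
  have i1 : IsProbabilityMeasure (ProbabilityTheory.cond P A) :=
    ProbabilityTheory.cond_isProbabilityMeasure hA0
  have i2 : IsProbabilityMeasure (ProbabilityTheory.cond P D) :=
    ProbabilityTheory.cond_isProbabilityMeasure hD0
  have i3 : IsProbabilityMeasure ((ProbabilityTheory.cond P D).map V) :=
    Measure.isProbabilityMeasure_map hVm.aemeasurable
  have hcond : ∀ {f : Ω → ℝ} {B : Set Ω}, P B ≠ 0 → Integrable f P →
      Integrable f (ProbabilityTheory.cond P B) := fun hB hf =>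
    hf.restrict.smul_measure (ENNReal.inv_ne_top.2 hB)
  obtain ⟨V', hV'm, hV'law, hle⟩ := (hP.cond hA hA0).exists_map_eq_and_le
    ((ProbabilityTheory.cond P D).map V)
    ((integrable_map_measure (by fun_prop) hVm.aemeasurable).2 (hcond hD0 hV)) (hcond hA0 hY)
  refine ⟨V', hV'm, ?_, ?_⟩
  · simp only [ProbabilityTheory.cond, Measure.map_smul] at hV'law
    have h := congrArg (fun m => P A • m) hV'law
    simpa [smul_smul, ← hAD, ENNReal.mul_inv_cancel hA0 (measure_ne_top _ _)] using h
  · rw [integral_map hVm.aemeasurable (by fun_prop)] at hle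
    simp only [ProbabilityTheory.cond, integral_smul_measure, ← hAD, ENNReal.toReal_inv,
      smul_eq_mul] at hle
    change (P.real A)⁻¹ * _ * ((P.real A)⁻¹ * _) ≤ (P.real A)⁻¹ * _ at hle
    have h := mul_le_mul_of_nonneg_left hle (mul_pos hAr hAr).le
    field_simp at h
    linarith

/-- A rearrangement of `V` that carries its values on `D` to `A`, its values on `Dᶜ` to `Aᶜ`, and
whose pairing with `Y` is bounded below by the averages over the blocks. -/
lemma IsAtomless.exists_rearrangement {P : Measure Ω} [IsProbabilityMeasure P]
    (hP : IsAtomless P) (pr : PairedSpaces P) {A D : Set Ω} (hA : MeasurableSet A)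
    (hD : MeasurableSet D) {p : ℝ} (hp0 : 0 < p) (hp1 : p < 1) (hAp : P.real A = p)
    (hDp : P.real D = p) {V Y : Ω → ℝ} (hV : V ∈ pr.carrier) (hY : Y ∈ pr.dual) :
    ∃ V' : Ω → ℝ, Measurable V' ∧ SameLaw P V' V ∧
      (∫ ω in D, V ω ∂P) * (∫ ω in A, Y ω ∂P) / p +
        (∫ ω in Dᶜ, V ω ∂P) * (∫ ω in Aᶜ, Y ω ∂P) / (1 - p) ≤ ∫ ω, V' ω * Y ω ∂P := by
  classical
  have hVm := pr.meas_carrier V hV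
  have hVi := pr.int_carrier V hV
  have hYi := pr.int_dual Y hY
  have hAD : P A = P D := by
    rw [← ENNReal.toReal_eq_toReal_iff' (measure_ne_top _ _) (measure_ne_top _ _)]
    exact hAp.trans hDp.symm
  have hADc : P Aᶜ = P Dᶜ := by
    rw [prob_compl_eq_one_sub hA, prob_compl_eq_one_sub hD, hAD]
  have hAc : P.real Aᶜ = 1 - p := by rw [probReal_compl_eq_one_sub hA, hAp]
  obtain ⟨V₁, hV₁, hlaw₁, hle₁⟩ := hP.exists_rearrangement_on hA hAD hVm hVi hYi
  obtain ⟨V₂, hV₂, hlaw₂, hle₂⟩ := hP.exists_rearrangement_on hA.compl hADc hVm hVi hYi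
  let W : Ω → ℝ := A.piecewise V₁ V₂
  have hWm : Measurable W := Measurable.piecewise hA hV₁ hV₂
  have hWlaw : SameLaw P W V := by
    have e₁ : (P.restrict A).map W = (P.restrict A).map V₁ :=
      Measure.map_congr (piecewise_ae_eq_restrict hA)
    have e₂ : (P.restrict Aᶜ).map W = (P.restrict Aᶜ).map V₂ :=
      Measure.map_congr (piecewise_ae_eq_restrict_compl hA)
    unfold SameLaw
    rw [← Measure.restrict_add_restrict_compl (μ := P) hA, Measure.map_add _ _ hWm, e₁, e₂,
      hlaw₁, hlaw₂, ← Measure.map_add _ _ hVm, Measure.restrict_add_restrict_compl hA,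
      Measure.restrict_add_restrict_compl hD]
  have hWi : Integrable (fun ω => W ω * Y ω) P :=
    pr.mul_int W (pr.lawinv_carrier V hV W hWm hWlaw) Y hY
  refine ⟨W, hWm, hWlaw, ?_⟩
  rw [← integral_add_compl hA hWi]
  have f₁ : ∫ ω in A, W ω * Y ω ∂P = ∫ ω in A, V₁ ω * Y ω ∂P :=
    setIntegral_congr_fun hA fun ω hω => by simp only [W]; rw [piecewise_eq_of_mem _ _ _ hω]
  have f₂ : ∫ ω in Aᶜ, W ω * Y ω ∂P = ∫ ω in Aᶜ, V₂ ω * Y ω ∂P :=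
    setIntegral_congr_fun hA.compl fun ω hω => by
      simp only [W]; rw [piecewise_eq_of_notMem _ _ _ hω]
  rw [f₁, f₂]
  rw [hAp] at hle₁
  rw [hAc] at hle₂
  refine add_le_add ?_ ?_
  · rw [div_le_iff₀ hp0]; linarith
  · rw [div_le_iff₀ (by linarith)]; linarith

/-! ### Functionals bounded above on the set -/

lemma measureReal_gt_integral_pos {P : Measure Ω} [IsProbabilityMeasure P] {Y : Ω → ℝ}
    (hY : Integrable Y P) (hne : ¬ Y =ᵐ[P] fun _ => ∫ ω, Y ω ∂P) :
    0 < P.real {ω | ∫ ω, Y ω ∂P < Y ω} := by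
  refine (measureReal_nonneg).lt_of_ne fun h => hne ?_
  have h0 : P {ω | ∫ ω, Y ω ∂P < Y ω} = 0 := (measureReal_eq_zero_iff (measure_ne_top _ _)).1 h.symm
  have hle : Y ≤ᵐ[P] fun _ => ∫ ω, Y ω ∂P := by
    rw [Filter.EventuallyLE, ae_iff]
    simpa using h0
  refine (integral_eq_iff_of_ae_le hY (integrable_const _) hle).1 ?_
  simp

lemma setIntegral_gt {P : Measure Ω} [IsProbabilityMeasure P] {Y : Ω → ℝ} (hY : Integrable Y P)
    {A : Set Ω} (hA : MeasurableSet A) {m : ℝ} (hm : ∀ ω ∈ A, m < Y ω) (hA0 : 0 < P.real A) :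
    P.real A * m < ∫ ω in A, Y ω ∂P := by
  have h : 0 < ∫ ω in A, (Y ω - m) ∂P := by
    rw [setIntegral_pos_iff_support_of_nonneg_ae]
    · have : Function.support (fun ω => Y ω - m) ∩ A = A :=
        inter_eq_right.2 fun ω hω => by simpa using (sub_pos.2 (hm ω hω)).ne'
      rw [this]
      exact (ENNReal.toReal_pos_iff.1 hA0).1
    · filter_upwards [ae_restrict_mem hA] with ω hω
      simpa using (hm ω hω).le
    · exact (hY.sub (integrable_const m)).integrableOn
  rw [integral_sub hY.integrableOn (integrable_const m)] at h
  simpa using h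

/-- A random variable in `𝒳*` whose pairing is bounded above on `C` is constant: otherwise mass of
`U + n Z` where `Z > 0` is moved to where `Y` exceeds its mean, which makes the pairing grow
linearly in `n`. -/
lemma ae_const_of_bounded {P : Measure Ω} [IsProbabilityMeasure P] (hP : IsAtomless P)
    (pr : PairedSpaces P) {C : Set (Ω → ℝ)} (hCsub : C ⊆ pr.carrier) (hCne : C.Nonempty)
    (hClaw : LawInvariantSet P C) {Z : Ω → ℝ} (hZ : Z ∈ recCone pr.carrier C)
    (hZne : ¬ Z =ᵐ[P] (fun _ => (0:ℝ))) (hEZ : (∫ ω, Z ω ∂P) = 0)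
    {Y : Ω → ℝ} (hY : Y ∈ pr.dual) {M : ℝ} (hM : ∀ X ∈ C, ∫ ω, X ω * Y ω ∂P ≤ M) :
    Y =ᵐ[P] fun _ => ∫ ω, Y ω ∂P := by
  by_contra hne
  obtain ⟨U, hU⟩ := hCne
  have hYi := pr.int_dual Y hY
  have hZi := pr.int_carrier Z hZ.1
  have hUi := pr.int_carrier U (hCsub hU)
  set m := ∫ ω, Y ω ∂P with hm
  have hYpos : 0 < P.real {ω | m < Y ω} := measureReal_gt_integral_pos hYi hne
  have hZpos : 0 < P.real {ω | 0 < Z ω} := by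
    have := measureReal_gt_integral_pos hZi (by rwa [hEZ])
    rwa [hEZ] at this
  obtain ⟨p, hp0, hp1, hpY, hpZ⟩ : ∃ p : ℝ, 0 < p ∧ p < 1 ∧ p ≤ P.real {ω | m < Y ω} ∧
      p ≤ P.real {ω | 0 < Z ω} := by
    have h1 : P.real {ω | m < Y ω} ≤ 1 := measureReal_le_one
    refine ⟨min (P.real {ω | m < Y ω}) (P.real {ω | 0 < Z ω}) / 2, by positivity, ?_, ?_, ?_⟩
    all_goals
      have h2 := min_le_left (P.real {ω | m < Y ω}) (P.real {ω | 0 < Z ω})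
      have h3 := min_le_right (P.real {ω | m < Y ω}) (P.real {ω | 0 < Z ω})
      linarith
  obtain ⟨A, hA, hAY, hAp⟩ := hP.exists_subset_measureReal_eq
    (measurableSet_lt measurable_const (pr.meas_dual Y hY)) hp0.le hpY
  obtain ⟨D, hD, hDZ, hDp⟩ := hP.exists_subset_measureReal_eq
    (measurableSet_lt measurable_const (pr.meas_carrier Z hZ.1)) hp0.le hpZ
  have ha : p * m < ∫ ω in A, Y ω ∂P := by
    have := setIntegral_gt hYi hA (fun ω hω => hAY hω) (by linarith)
    rwa [hAp] at this
  have hz : 0 < ∫ ω in D, Z ω ∂P := by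
    have := setIntegral_gt hZi hD (fun ω hω => hDZ hω) (by linarith)
    rwa [mul_zero] at this
  have hac : ∫ ω in Aᶜ, Y ω ∂P = m - ∫ ω in A, Y ω ∂P := by
    rw [hm, ← integral_add_compl hA hYi]; ring
  have hzc : ∫ ω in Dᶜ, Z ω ∂P = - ∫ ω in D, Z ω ∂P := by
    have := integral_add_compl hD hZi
    linarith
  have hVn : ∀ n : ℕ, (fun ω => U ω + n * Z ω) ∈ C := by
    intro n
    induction n with
    | zero => simpa using hU
    | succ n ih =>
      have := hZ.2 _ ih
      convert this using 2
      push_cast; ring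
  have hsplit : ∀ (n : ℕ) (B : Set Ω), ∫ ω in B, (U ω + n * Z ω) ∂P =
      (∫ ω in B, U ω ∂P) + n * ∫ ω in B, Z ω ∂P := by
    intro n B
    rw [integral_add hUi.integrableOn (hZi.const_mul _).integrableOn, integral_const_mul]
  set a := ∫ ω in A, Y ω ∂P
  set z := ∫ ω in D, Z ω ∂P
  set c := z * (a / p - (m - a) / (1 - p)) with hc
  have hcpos : 0 < c := by
    refine mul_pos hz (sub_pos.2 ?_)
    rw [div_lt_div_iff₀ (by linarith) hp0]
    nlinarith
  have hgrow : ∀ n : ℕ, (∫ ω in D, U ω ∂P) * a / p +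
      (∫ ω in Dᶜ, U ω ∂P) * (m - a) / (1 - p) + n * c ≤ M := by
    intro n
    obtain ⟨V', hV'm, hV'law, hle⟩ := hP.exists_rearrangement pr hA hD hp0 hp1 hAp hDp
      (hCsub (hVn n)) hY
    refine le_trans (le_of_eq ?_) (hle.trans (hM V' (hClaw _ (hVn n) V' hV'm hV'law)))
    rw [hsplit, hsplit, hac, hzc, hc]
    ring
  obtain ⟨n, hn⟩ := exists_nat_gt ((M - ((∫ ω in D, U ω ∂P) * a / p +
      (∫ ω in Dᶜ, U ω ∂P) * (m - a) / (1 - p))) / c)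
  rw [div_lt_iff₀ hcpos] at hn
  linarith [hgrow n]

/-! ### Separation in the weak topology -/

lemma PairedSpaces.sum_mem_dual {P : Measure Ω} (pr : PairedSpaces P) {ι : Type*} (s : Finset ι)
    (a : ι → ℝ) (Y : ι → Ω → ℝ) (hY : ∀ i, Y i ∈ pr.dual) :
    (fun ω => ∑ i ∈ s, a i * Y i ω) ∈ pr.dual := by
  classical
  induction s using Finset.induction_on with
  | empty => simpa using pr.linf_dual (fun _ => 0) ⟨measurable_const, 0, by simp⟩
  | insert i s hi ih =>
    simp only [Finset.sum_insert hi]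
    exact pr.add_dual _ (pr.smul_dual _ (hY i) (a i)) _ ih

/-- Strict separation of a point from a convex `σ(𝒳, 𝒳*)`-closed set by an element of `𝒳*`. A
weak neighbourhood only involves finitely many elements of `𝒳*`, so this is Hahn–Banach in a
finite-dimensional space. -/
lemma exists_separation {P : Measure Ω} (pr : PairedSpaces P) {C : Set (Ω → ℝ)}
    (hCsub : C ⊆ pr.carrier) (hCconv : ConvexSet C) (hCcl : WeakClosed P pr C)
    {X₀ : Ω → ℝ} (hX₀ : X₀ ∈ pr.carrier) (hX₀C : X₀ ∉ C) :
    ∃ Y ∈ pr.dual, ∃ u : ℝ, (∀ X ∈ C, ∫ ω, X ω * Y ω ∂P ≤ u) ∧ u < ∫ ω, X₀ ω * Y ω ∂P := by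
  classical
  obtain ⟨O, hO, hOC⟩ := isOpen_induced_iff.1 hCcl.isOpen_compl
  have hmem : ∀ X : pr.carrier, (fun Y : pr.dual => ∫ ω, (X : Ω → ℝ) ω * (Y : Ω → ℝ) ω ∂P) ∈ O ↔
      (X : Ω → ℝ) ∉ C := fun X => (Set.ext_iff.1 hOC X)
  obtain ⟨I, v, hv, hboxO⟩ := isOpen_pi_iff.1 hO _ ((hmem ⟨X₀, hX₀⟩).2 hX₀C)
  let Φ : (Ω → ℝ) → (I → ℝ) := fun X i => ∫ ω, X ω * (i : pr.dual).1 ω ∂P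
  have hconv : Convex ℝ (Φ '' C) := by
    rintro _ ⟨X, hX, rfl⟩ _ ⟨X', hX', rfl⟩ a b ha hb hab
    obtain rfl : b = 1 - a := by linarith
    refine ⟨_, hCconv X hX X' hX' a ⟨ha, by linarith⟩, ?_⟩
    ext i
    have h1 := pr.mul_int X (hCsub hX) _ (i : pr.dual).2
    have h2 := pr.mul_int X' (hCsub hX') _ (i : pr.dual).2
    simp only [Φ, Pi.add_apply, Pi.smul_apply, smul_eq_mul]
    rw [← integral_const_mul, ← integral_const_mul,
      ← integral_add (h1.const_mul a) (h2.const_mul (1 - a))]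
    congr 1
    ext ω
    ring
  have hnot : Φ X₀ ∉ closure (Φ '' C) := by
    intro hcl
    have hN : IsOpen (Set.pi univ fun i : I => v i) :=
      isOpen_set_pi finite_univ fun i _ => (hv i i.2).1
    obtain ⟨_, hy, X, hX, rfl⟩ := mem_closure_iff.1 hcl _ hN fun i _ => (hv i i.2).2
    exact (hmem ⟨X, hCsub hX⟩).1 (hboxO fun i hi => hy ⟨i, hi⟩ (mem_univ _)) hX
  obtain ⟨f, u, hfu, huf⟩ := geometric_hahn_banach_closed_point hconv.closure isClosed_closure hnot
  let Y : Ω → ℝ := fun ω => ∑ i : I, f (Pi.single i 1) * (i : pr.dual).1 ω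
  have hYd : Y ∈ pr.dual := pr.sum_mem_dual Finset.univ (fun i : I => f (Pi.single i 1))
    (fun i => (i : pr.dual).1) fun i => (i : pr.dual).2
  have hfY : ∀ X ∈ pr.carrier, ∫ ω, X ω * Y ω ∂P = f (Φ X) := by
    intro X hX
    have e : f (Φ X) = ∑ i, Φ X i * f (Pi.single i 1) := by
      have := LinearMap.pi_apply_eq_sum_univ (f : (I → ℝ) →ₗ[ℝ] ℝ) (Φ X)
      have h : ∀ i : I, (fun j : I => if i = j then (1 : ℝ) else 0) = Pi.single i 1 := fun i => by
        ext j; simp [Pi.single_apply, eq_comm]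
      simp only [h, smul_eq_mul] at this
      exact this
    rw [e]
    simp only [Y, Finset.mul_sum]
    rw [integral_finsetSum]
    · refine Finset.sum_congr rfl fun i _ => ?_
      rw [mul_comm, ← integral_const_mul]
      congr 1; ext ω; ring
    · intro i _
      refine ((pr.mul_int X hX _ (i : pr.dual).2).const_mul (f (Pi.single i 1))).congr ?_
      exact Filter.Eventually.of_forall fun ω => by simp only; ring
  refine ⟨Y, hYd, u, fun X hX => ?_, ?_⟩
  · rw [hfY X (hCsub hX)]
    exact (hfu _ (subset_closure ⟨X, hX, rfl⟩)).le
  · rw [hfY X₀ hX₀]; exact huf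

/-! ### Collapse to the mean -/

/-- geometric collapse to the mean. A nonempty convex `σ(𝒳,𝒳*)`-closed
law-invariant set admitting a nonzero recession direction with zero expectation is
determined by the expectation. -/
theorem collapse_convex_set
    (P : Measure Ω) [IsProbabilityMeasure P] (hP : IsAtomless P)
    (pr : PairedSpaces P) (C : Set (Ω → ℝ)) (hCsub : C ⊆ pr.carrier)
    (hCne : C.Nonempty) (hCconv : ConvexSet C) (hCcl : WeakClosed P pr C)
    (hClaw : LawInvariantSet P C)
    (Z : Ω → ℝ) (hZ : Z ∈ recCone pr.carrier C)
    (hZne : ¬ Z =ᵐ[P] (fun _ => (0:ℝ))) (hEZ : (∫ ω, Z ω ∂P) = 0) :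
    (∀ Y ∈ pr.dual, suppFn P C Y < (⊤ : EReal) → ∃ c : ℝ, Y =ᵐ[P] fun _ => c) ∧
    C = {X | X ∈ pr.carrier ∧
      -(suppFn P C (fun _ => (-1:ℝ))) ≤ ((∫ ω, X ω ∂P : ℝ) : EReal) ∧
      ((∫ ω, X ω ∂P : ℝ) : EReal) ≤ suppFn P C (fun _ => (1:ℝ))} := by

  have hle : ∀ X ∈ C, ∀ Y : Ω → ℝ, ((∫ ω, X ω * Y ω ∂P : ℝ) : EReal) ≤ suppFn P C Y :=
    fun X hX Y => le_iSup₂ (f := fun X (_ : X ∈ C) => ((∫ ω, X ω * Y ω ∂P : ℝ) : EReal)) X hX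
  have hconst : ∀ Y ∈ pr.dual, ∀ M : ℝ, (∀ X ∈ C, ∫ ω, X ω * Y ω ∂P ≤ M) →
      ∃ c : ℝ, Y =ᵐ[P] fun _ => c := fun Y hY M hM =>
    ⟨_, ae_const_of_bounded hP pr hCsub hCne hClaw hZ hZne hEZ hY hM⟩
  refine ⟨fun Y hY hlt => ?_, ?_⟩
  · obtain ⟨M, hM, -⟩ := EReal.lt_iff_exists_real_btwn.1 hlt
    exact hconst Y hY M fun X hX => by exact_mod_cast (hle X hX Y).trans hM.le
  · ext X₀
    constructor
    · intro hX
      refine ⟨hCsub hX, ?_, ?_⟩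
      · have := hle X₀ hX (fun _ => -1)
        rw [EReal.neg_le]
        simpa [integral_neg] using this
      · simpa using hle X₀ hX (fun _ => 1)
    · rintro ⟨hX₀, hlo, hhi⟩
      by_contra hX₀C
      obtain ⟨Y, hY, u, hYu, huY⟩ := exists_separation pr hCsub hCconv hCcl hX₀ hX₀C
      obtain ⟨c, hc⟩ := hconst Y hY u hYu
      have hpair : ∀ X : Ω → ℝ, ∫ ω, X ω * Y ω ∂P = (∫ ω, X ω ∂P) * c := by
        intro X
        rw [← integral_mul_const]
        refine integral_congr_ae ?_
        filter_upwards [hc] with ω hω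
        rw [hω]
      simp only [hpair] at hYu huY
      rcases lt_trichotomy c 0 with hneg | rfl | hpos
      · have h : suppFn P C (fun _ => (-1 : ℝ)) ≤ ((u / -c : ℝ) : EReal) := by
          refine iSup₂_le fun X hX => ?_
          rw [EReal.coe_le_coe_iff, le_div_iff₀ (by linarith)]
          have := hYu X hX
          rw [integral_mul_const]
          linarith
        rw [EReal.neg_le] at hlo
        have h2 := hlo.trans h
        rw [← EReal.coe_neg, EReal.coe_le_coe_iff, le_div_iff₀ (by linarith)] at h2
        linarith
      · obtain ⟨X, hX⟩ := hCne
        have := hYu X hX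
        simp only [mul_zero] at this huY
        linarith
      · have h : suppFn P C (fun _ => (1 : ℝ)) ≤ ((u / c : ℝ) : EReal) := by
          refine iSup₂_le fun X hX => ?_
          rw [EReal.coe_le_coe_iff, le_div_iff₀ hpos]
          have := hYu X hX
          rw [integral_mul_const]
          linarith
        have h2 := hhi.trans h
        rw [EReal.coe_le_coe_iff, le_div_iff₀ hpos] at h2
        linarith

end Collapse
end
end

section
/- Let φ : X → (−∞, ∞] be proper, convex, σ(X, X*)-lower semicontinuous, and law invariant. Then the following are equivalent: (i) φ is expectation invariant; (ii) φ is the pointwise supremum of a family of affine functions of the expectation, i.e. there is a nonempty family {(a_i, b_i)} ⊂ ℝ² with φ(X) = sup_i {a_i E[X] + b_i} for all X ∈ X; (iii) there exists a nonconstant Z ∈ X with E[Z] = 0 such that φ(X + tZ) = φ(X) for all X ∈ X and t ∈ ℝ; (iv) there exist a ∈ ℝ and a nonconstant Z ∈ X with E[Z] = 0 such that φ(X + tZ) = φ(X) + a t for all X ∈ X and t ∈ ℝ; (v) for every X ∈ X there exists a nonconstant Z_X ∈ X with E[Z_X] = 0 such that φ(X + tZ_X) ≤ φ(X) for all t ≥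 0; (vi) there exist X ∈ dom(φ) and a nonconstant Z ∈ X with E[Z] = 0 such that φ(X + tZ) ≤ φ(X) for all t ≥ 0; (vii) every Y ∈ X* with φ*(Y) < ∞ is P-a.s. constant. -/
/-!
Two facts carry the equivalence.

*Rearrangement* (`exists_rearrangement`). On an atomless space every `X` has a rearrangement `X'`,
with the same law, that is comonotone with a given `Y`; by Chebyshev's association inequality
`E[X'Y] ≥ E[X] E[Y]`, strictly if neither variable is constant. The rearrangement is the quantile
function of `X` composed with a uniform variable of which `Y` is a nondecreasing function, namely
the rank in the lexicographic order of `(Y, V)`, where `V` is any variable with a diffuse law.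

*Duality* (`le_of_minorants`). By Hahn–Banach in `𝒳 × ℝ`, `φ` is the supremum of its affine
minorants `X ↦ E[XY] - K`; the slopes `Y` of these are exactly the points where `φ*` is finite.

The central implication is (vi) ⇒ (vii). A direction `Z` of recession at one point of the domain
satisfies `E[ZY] ≤ 0` for every slope `Y`, hence is a direction of recession everywhere. By the
rearrangement lemma each minorant takes at some rearrangement of `X` at least its value at `E[X]`,
so `φ(E[X]) ≤ φ(X)` and the domain contains a constant `c`. Since `c + tZ'` and `c + tZ` have the
same law when `Z'` and `Z` do, every rearrangement `Z'` of `Z` is also a direction of recession, so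
`E[Z'Y] ≤ 0`; were `Y` not constant, some `Z'` would give `E[Z'Y] > E[Z] E[Y] = 0`. Under (vii) all
affine minorants are affine functions of the mean, which is (ii); the other implications are
elementary.
-/

open MeasureTheory Set List
open scoped ENNReal NNReal

noncomputable section

namespace Collapse

variable {Ω : Type*} [MeasurableSpace Ω]

/-! ### Comonotone rearrangements on atomless spaces -/

/-- Among all random variables `V`, the number `(P ⊗ P){V(ω) = V(ω')}` attains its minimum, and a
minimiser cannot have an atom in its law: splitting the atom would lower the number. -/
lemma exists_null_fibers (P : Measure Ω) [IsProbabilityMeasure P] (hP : IsAtomless P) :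
    ∃ V : Ω → ℝ, Measurable V ∧ ∀ v, P {ω | V ω = v} = 0 := by
  set m : (Ω → ℝ) → ℝ≥0∞ := fun V => (P.prod P) {p | V p.1 = V p.2} with hm
  set S : Set ℝ≥0∞ := m '' {V | Measurable V} with hS
  have hne : S.Nonempty := ⟨m 0, 0, measurable_const, rfl⟩
  obtain ⟨u, -, hu, huS⟩ := exists_seq_tendsto_sInf hne (OrderBot.bddBelow S)
  choose Vn hVn hVu using huS
  -- a single random variable that determines every term of the minimising sequence
  set W : Ω → ℝ := fun ω => embeddingReal (ℕ → ℝ) (fun n => Vn n ω) with hW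
  have hWm : Measurable W :=
    (measurable_embeddingReal _).comp (measurable_pi_lambda _ fun n => hVn n)
  have hWle : m W ≤ sInf S := by
    refine ge_of_tendsto' hu fun n => ?_
    rw [← hVu n]
    refine measure_mono fun p hp => ?_
    have := (measurableEmbedding_embeddingReal (ℕ → ℝ)).injective hp
    exact congrFun this n
  refine ⟨W, hWm, fun v => ?_⟩
  by_contra hv
  set A : Set Ω := {ω | W ω = v} with hA
  have hAm : MeasurableSet A := hWm (measurableSet_singleton v)
  obtain ⟨B, hBm, hBA, hB0, hBlt⟩ := hP A hAm (pos_iff_ne_zero.2 hv)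
  set W2 : Ω → ℝ := fun ω => embeddingReal (ℝ × ℝ) (W ω, B.indicator 1 ω) with hW2
  have hW2m : Measurable W2 :=
    (measurable_embeddingReal _).comp
      (hWm.prodMk ((measurable_one (α := ℝ)).indicator hBm))
  have hinj : ∀ ω ω', W2 ω = W2 ω' →
      W ω = W ω' ∧ B.indicator (1 : Ω → ℝ) ω = B.indicator 1 ω' := fun ω ω' h => by
    have := (measurableEmbedding_embeddingReal (ℝ × ℝ)).injective h
    exact Prod.ext_iff.1 this
  have hdiff : P (A \ B) ≠ 0 := by
    rw [measure_sdiff hBA hBm.nullMeasurableSet (measure_ne_top _ _)]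
    exact (tsub_pos_of_lt hBlt).ne'
  have hle : m W2 + P B * P (A \ B) ≤ m W := by
    rw [← Measure.prod_prod, hm]
    dsimp only
    rw [← measure_union _ (hBm.prod (hAm.diff hBm))]
    · refine measure_mono ?_
      rintro ⟨ω, ω'⟩ (h | ⟨h1, h2⟩)
      · exact (hinj _ _ h).1
      · have e1 : W ω = v := hBA h1
        have e2 : W ω' = v := h2.1
        exact e1.trans e2.symm
    · rw [Set.disjoint_left]
      rintro ⟨ω, ω'⟩ h ⟨h1, h2⟩
      have := (hinj _ _ h).2
      rw [Set.indicator_of_mem h1, Set.indicator_of_notMem h2.2] at this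
      exact one_ne_zero this
  have h2 : m W ≤ m W2 := hWle.trans (sInf_le ⟨W2, hW2m, rfl⟩)
  have hfin : m W2 ≠ ∞ := measure_ne_top _ _
  have hpos : P B * P (A \ B) ≠ 0 := mul_ne_zero hB0.ne' hdiff
  exact absurd (hle.trans h2) (not_le.2 (ENNReal.lt_add_right hfin hpos))

/-- If every initial segment `{ω' | r ω' ω}`, `ω ∈ L`, of a measurable total preorder `r` has
probability at most `t`, then so does `L`: a sequence of initial segments exhausts the supremum of
their probabilities, and the part of `L` above all of them is null by Fubini. -/
lemma measure_le_of_segments (P : Measure Ω) [IsProbabilityMeasure P] (r : Ω → Ω → Prop)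
    (htot : ∀ a b, r a b ∨ r b a) (htr : ∀ a b c, r a b → r b c → r a c)
    (hrm : MeasurableSet {p : Ω × Ω | r p.1 p.2}) (L : Set Ω) (hL : MeasurableSet L) (t : ℝ≥0∞)
    (h : ∀ ω ∈ L, P {ω' | r ω' ω} ≤ t) : P L ≤ t := by
  rcases L.eq_empty_or_nonempty with rfl | hne
  · simp
  have hseg : ∀ ω, MeasurableSet {ω' | r ω' ω} := fun ω =>
    hrm.preimage (measurable_id.prodMk measurable_const)
  set S : Set ℝ≥0∞ := (fun ω => P {ω' | r ω' ω}) '' L with hS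
  obtain ⟨u, -, hu, huS⟩ := exists_seq_tendsto_sSup (hne.image _ : S.Nonempty) (OrderTop.bddAbove S)
  choose w hwL hwu using huS
  set G : Set Ω := ⋃ n, {ω' | r ω' (w n)} with hG
  have hGm : MeasurableSet G := MeasurableSet.iUnion fun n => hseg _
  have hSt : sSup S ≤ t := sSup_le (by rintro _ ⟨ω, hω, rfl⟩; exact h ω hω)
  have hSG : sSup S ≤ P G := le_of_tendsto' hu fun n => by
    rw [← hwu n]
    exact measure_mono (Set.subset_iUnion (fun n => {ω' | r ω' (w n)}) n)
  have hGS : P G ≤ sSup S := by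
    rw [hG, Directed.measure_iUnion]
    · exact iSup_le fun n => le_sSup ⟨w n, hwL n, rfl⟩
    · intro i j
      rcases htot (w i) (w j) with hij | hij
      · exact ⟨j, fun x hx => htr _ _ _ hx hij, fun x hx => hx⟩
      · exact ⟨i, fun x hx => hx, fun x hx => htr _ _ _ hx hij⟩
  set D : Set Ω := L \ G with hD
  have hDm : MeasurableSet D := hL.diff hGm
  have hDn : ∀ ω ∈ D, P ({ω' | r ω' ω} ∩ D) = 0 := by
    intro ω hω
    have hsub : G ⊆ {ω' | r ω' ω} := by
      refine Set.iUnion_subset fun n x hx => ?_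
      refine htr _ _ _ hx ((htot (w n) ω).resolve_right fun hc => ?_)
      exact hω.2 (Set.mem_iUnion.2 ⟨n, hc⟩)
    have h0 : P ({ω' | r ω' ω} \ G) = 0 := by
      rw [measure_sdiff hsub hGm.nullMeasurableSet (measure_ne_top _ _)]
      exact tsub_eq_zero_of_le ((le_sSup ⟨ω, hω.1, rfl⟩ : _ ≤ sSup S).trans hSG)
    exact measure_mono_null (t := {ω' | r ω' ω} \ G) (fun x hx => ⟨hx.1, hx.2.2⟩) h0
  have hDD : P D * P D = 0 := by
    rw [← Measure.prod_prod]
    have hm2 : MeasurableSet {p : Ω × Ω | r p.2 p.1} := hrm.preimage measurable_swap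
    have n2 : (P.prod P) ({p : Ω × Ω | r p.2 p.1} ∩ D ×ˢ D) = 0 := by
      rw [Measure.measure_prod_null (hm2.inter (hDm.prod hDm))]
      refine ae_of_all _ fun ω => ?_
      by_cases hω : ω ∈ D
      · exact measure_mono_null (t := {ω' | r ω' ω} ∩ D) (fun x hx => ⟨hx.1, hx.2.2⟩) (hDn ω hω)
      · refine measure_mono_null (t := ∅) (fun x hx => hω hx.2.1) measure_empty
    have n1 : (P.prod P) ({p : Ω × Ω | r p.1 p.2} ∩ D ×ˢ D) = 0 := by
      rw [← Measure.prod_swap, Measure.map_apply measurable_swap (hrm.inter (hDm.prod hDm))]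
      exact measure_mono_null (t := {p : Ω × Ω | r p.2 p.1} ∩ D ×ˢ D)
        (fun x hx => ⟨hx.1, hx.2.2, hx.2.1⟩) n2
    refine measure_mono_null (fun p hp => ?_) (measure_union_null n1 n2)
    rcases htot p.1 p.2 with h | h
    · exact Or.inl ⟨h, hp⟩
    · exact Or.inr ⟨h, hp⟩
  have hD0 : P D = 0 := by simpa using hDD
  calc P L ≤ P (G ∪ D) := measure_mono fun x hx => by
        by_cases hxG : x ∈ G
        · exact Or.inl hxG
        · exact Or.inr ⟨hx, hxG⟩
    _ ≤ P G + P D := measure_union_le _ _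
    _ ≤ t := by rw [hD0, add_zero]; exact hGS.trans hSt

/-- On an atomless space there is a uniform random variable `U` of which `Y` is (pointwise) a
nondecreasing function: the rank of `ω` in the lexicographic order of `(Y, V)`, where `V` has a
diffuse law and breaks the ties of `Y`. -/
lemma exists_uniform (P : Measure Ω) [IsProbabilityMeasure P] (hP : IsAtomless P)
    (Y : Ω → ℝ) (hY : Measurable Y) :
    ∃ U : Ω → ℝ, Measurable U ∧
      (∀ t ∈ Set.Icc (0 : ℝ) 1, P {ω | U ω ≤ t} = ENNReal.ofReal t) ∧
      ∀ ω ω', U ω < U ω' → Y ω ≤ Y ω' := by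
  obtain ⟨V, hV, hV0⟩ := exists_null_fibers P hP
  set r : Ω → Ω → Prop := fun a b => Y a < Y b ∨ (Y a = Y b ∧ V a ≤ V b) with hr
  have htot : ∀ a b, r a b ∨ r b a := fun a b => by
    simp only [hr]
    rcases lt_trichotomy (Y a) (Y b) with h | h | h
    · exact Or.inl (Or.inl h)
    · rcases le_total (V a) (V b) with h' | h'
      · exact Or.inl (Or.inr ⟨h, h'⟩)
      · exact Or.inr (Or.inr ⟨h.symm, h'⟩)
    · exact Or.inr (Or.inl h)
  have htr : ∀ a b c, r a b → r b c → r a c := by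
    rintro a b c (h | ⟨h, h'⟩) (k | ⟨k, k'⟩)
    · exact Or.inl (h.trans k)
    · exact Or.inl (k ▸ h)
    · exact Or.inl (h ▸ k)
    · exact Or.inr ⟨h.trans k, h'.trans k'⟩
  have hrm : MeasurableSet {p : Ω × Ω | r p.1 p.2} := by
    have y1 : Measurable fun p : Ω × Ω => Y p.1 := hY.comp measurable_fst
    have y2 : Measurable fun p : Ω × Ω => Y p.2 := hY.comp measurable_snd
    have v1 : Measurable fun p : Ω × Ω => V p.1 := hV.comp measurable_fst
    have v2 : Measurable fun p : Ω × Ω => V p.2 := hV.comp measurable_snd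
    exact (measurableSet_lt y1 y2).union
      ((measurableSet_eq_fun y1 y2).inter (measurableSet_le v1 v2))
  have hrm' : MeasurableSet {p : Ω × Ω | r p.2 p.1} := hrm.preimage measurable_swap
  have hU : Measurable fun ω => P {ω' | r ω' ω} := measurable_measure_prodMk_left hrm'
  have hseg : ∀ ω, MeasurableSet {ω' | r ω' ω} := fun ω =>
    hrm.preimage (measurable_id.prodMk measurable_const)
  have hseg' : ∀ ω, MeasurableSet {ω' | r ω ω'} := fun ω =>
    hrm'.preimage (measurable_id.prodMk measurable_const)
  have key : ∀ t : ℝ≥0∞, t ≤ 1 → P {ω | P {ω' | r ω' ω} ≤ t} = t := by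
    intro t ht
    set L : Set Ω := {ω | P {ω' | r ω' ω} ≤ t} with hLdef
    have hL : MeasurableSet L := hU measurableSet_Iic
    refine le_antisymm (measure_le_of_segments P r htot htr hrm L hL t fun ω hω => hω) ?_
    have h2 : P Lᶜ ≤ 1 - t := by
      refine measure_le_of_segments P (fun a b => r b a) (fun a b => htot b a)
        (fun a b c h k => htr _ _ _ k h) hrm' Lᶜ hL.compl (1 - t) fun ω hω => ?_
      have h3 : P {ω' | r ω' ω} ≤ P {ω' | r ω ω'}ᶜ := by
        calc P {ω' | r ω' ω} ≤ P ({ω' | r ω ω'}ᶜ ∪ {ω' | V ω' = V ω}) := by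
              refine measure_mono fun x hx => ?_
              by_cases hx2 : r ω x
              · right
                rcases hx with h | ⟨h, h'⟩ <;> rcases hx2 with k | ⟨k, k'⟩
                · exact absurd h k.not_gt
                · exact absurd k h.ne'
                · exact absurd h k.ne'
                · exact le_antisymm h' k'
              · exact Or.inl hx2
          _ ≤ P {ω' | r ω ω'}ᶜ + P {ω' | V ω' = V ω} := measure_union_le _ _
          _ = P {ω' | r ω ω'}ᶜ := by rw [hV0, add_zero]
      have h4 : t ≤ P {ω' | r ω ω'}ᶜ := (not_le.1 (show ¬ P {ω' | r ω' ω} ≤ t from hω)).le.trans h3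
      have h5 : P {ω' | r ω ω'} = 1 - P {ω' | r ω ω'}ᶜ := by
        rw [← prob_compl_eq_one_sub (hseg' ω).compl, compl_compl]
      rw [h5]
      exact tsub_le_tsub_left h4 1
    have h6 : P L = 1 - P Lᶜ := by
      rw [← prob_compl_eq_one_sub hL.compl, compl_compl]
    rw [h6]
    calc t = 1 - (1 - t) := (ENNReal.sub_sub_cancel ENNReal.one_ne_top ht).symm
      _ ≤ 1 - P Lᶜ := tsub_le_tsub_left h2 1
  refine ⟨fun ω => (P {ω' | r ω' ω}).toReal, hU.ennreal_toReal, fun t ht => ?_, fun ω ω' hlt => ?_⟩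
  · rw [← key (ENNReal.ofReal t) (by simpa using ht.2)]
    congr 1
    ext ω
    exact (ENNReal.le_ofReal_iff_toReal_le (measure_ne_top _ _) ht.1).symm
  · by_contra hc
    refine hlt.not_ge (ENNReal.toReal_mono (measure_ne_top _ _) (measure_mono fun x hx => ?_))
    exact htr _ _ _ hx (Or.inl (not_le.1 hc))

/-- On an atomless space every `X` can be rearranged to be comonotone with a given `Y`: compose the
quantile function of `X` with a uniform random variable of which `Y` is nondecreasing. Comonotonicity
is required off a null set only, because the quantile function may be infinite at `0` and `1`. -/
lemma exists_comonotone (P : Measure Ω) [IsProbabilityMeasure P] (hP : IsAtomless P)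
    (X Y : Ω → ℝ) (hX : Measurable X) (hY : Measurable Y) :
    ∃ X' : Ω → ℝ, Measurable X' ∧ SameLaw P X' X ∧ ∃ N : Set Ω, (∀ᵐ ω ∂P, ω ∈ N) ∧
      ∀ ω ∈ N, ∀ ω' ∈ N, 0 ≤ (X' ω - X' ω') * (Y ω - Y ω') := by
  obtain ⟨U, hU, hUt, hUY⟩ := exists_uniform P hP Y hY
  set F := ProbabilityTheory.cdf (Measure.map X P) with hF
  have hprob : IsProbabilityMeasure (Measure.map X P) :=
    Measure.isProbabilityMeasure_map hX.aemeasurable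
  set q : ℝ → ℝ := fun u => sInf {x | u ≤ F x} with hq
  have hbdd : ∀ u, 0 < u → BddBelow {x | u ≤ F x} := by
    intro u hu
    have h1 := (ProbabilityTheory.tendsto_cdf_atBot (Measure.map X P)).eventually
      (gt_mem_nhds hu)
    obtain ⟨b, hb⟩ := h1.exists
    refine ⟨b, fun x hx => ?_⟩
    by_contra hc
    have := F.mono (not_le.1 hc).le
    exact absurd (hx.trans this) (not_le.2 hb)
  have hnemp : ∀ u, u < 1 → {x | u ≤ F x}.Nonempty := by
    intro u hu
    have h1 := (ProbabilityTheory.tendsto_cdf_atTop (Measure.map X P)).eventually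
      (lt_mem_nhds hu)
    obtain ⟨b, hb⟩ := h1.exists
    exact ⟨b, hb.le⟩
  -- the Galois connection between the quantile function and the distribution function
  have hgal : ∀ u ∈ Set.Ioo (0 : ℝ) 1, ∀ x, q u ≤ x ↔ u ≤ F x := by
    intro u hu x
    refine ⟨fun h => ?_, fun h => csInf_le (hbdd u hu.1) h⟩
    have hgt : ∀ y, x < y → u ≤ F y := by
      intro y hy
      obtain ⟨z, hz, hzy⟩ := exists_lt_of_csInf_lt (hnemp u hu.2) (h.trans_lt hy)
      exact le_trans hz (F.mono hzy.le)
    have hrc : Filter.Tendsto F (nhdsWithin x (Set.Ioi x)) (nhds (F x)) :=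
      (F.right_continuous x).mono_left (nhdsWithin_mono _ Set.Ioi_subset_Ici_self)
    exact ge_of_tendsto hrc (by filter_upwards [self_mem_nhdsWithin] with y hy using hgt y hy)
  set N : Set Ω := {ω | U ω ∈ Set.Ioo (0 : ℝ) 1} with hN
  have hNm : MeasurableSet N := hU measurableSet_Ioo
  have hU0 : P {ω | U ω ≤ 0} = 0 := by simpa using hUt 0 (by simp)
  have hU1 : ∀ᵐ ω ∂P, U ω < 1 := by
    have h1 : P {ω | U ω < 1} = 1 := by
      refine le_antisymm prob_le_one (le_of_forall_lt fun c hc => ?_)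
      obtain ⟨d, hcd, hd⟩ := exists_between hc
      have hdt : d ≠ ∞ := (hd.trans ENNReal.one_lt_top).ne
      have hd1 : d.toReal < 1 := by
        have := (ENNReal.toReal_lt_toReal hdt ENNReal.one_ne_top).2 hd
        simpa using this
      refine hcd.trans_le ?_
      have h2 := hUt d.toReal ⟨ENNReal.toReal_nonneg, hd1.le⟩
      rw [ENNReal.ofReal_toReal hdt] at h2
      rw [← h2]
      exact measure_mono fun ω (hω : U ω ≤ d.toReal) => lt_of_le_of_lt hω hd1
    exact (prob_compl_eq_zero_iff (hU measurableSet_Iio)).2 h1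
  have hNae : ∀ᵐ ω ∂P, ω ∈ N := by
    have h0 : ∀ᵐ ω ∂P, 0 < U ω := by
      rw [ae_iff]; simpa using hU0
    filter_upwards [h0, hU1] with ω h h' using ⟨h, h'⟩
  classical
  set X' : Ω → ℝ := fun ω => if ω ∈ N then q (U ω) else 0 with hX'
  have hX'm : Measurable X' := by
    refine measurable_of_Iic fun x => ?_
    have : X' ⁻¹' Set.Iic x = (N ∩ {ω | U ω ≤ F x}) ∪ (Nᶜ ∩ {_ω | (0 : ℝ) ≤ x}) := by
      ext ω
      by_cases hω : ω ∈ N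
      · simp [hX', hω, hgal (U ω) hω x]
      · simp [hX', hω]
    rw [this]
    exact (hNm.inter (hU measurableSet_Iic)).union (hNm.compl.inter (MeasurableSet.const _))
  refine ⟨X', hX'm, ?_, N, hNae, ?_⟩
  · have := Measure.isProbabilityMeasure_map (μ := P) hX'm.aemeasurable
    refine Measure.ext_of_Iic _ _ fun x => ?_
    rw [Measure.map_apply hX'm measurableSet_Iic, ← ProbabilityTheory.ofReal_cdf,
      ← hUt _ ⟨ProbabilityTheory.cdf_nonneg _ x, ProbabilityTheory.cdf_le_one _ x⟩]
    refine measure_congr ?_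
    filter_upwards [hNae] with ω hω
    refine propext ?_
    change X' ω ≤ x ↔ U ω ≤ F x
    rw [← hgal (U ω) hω x]
    simp [hX', hω]
  · have hmono : ∀ ω ∈ N, ∀ ω' ∈ N, U ω ≤ U ω' → X' ω ≤ X' ω' := by
      intro ω hω ω' hω' h
      simp only [hX', hω, hω', if_true]
      rw [hgal _ hω]
      exact h.trans ((hgal _ hω' _).1 le_rfl)
    intro ω hω ω' hω'
    rcases lt_trichotomy (U ω) (U ω') with h | h | h
    · have h1 := hmono ω hω ω' hω' h.le
      have h2 := hUY _ _ h
      nlinarith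
    · have : X' ω = X' ω' := by simp only [hX', hω, hω', if_true, h]
      simp [this]
    · have h1 := hmono ω' hω' ω hω h.le
      have h2 := hUY _ _ h
      nlinarith

lemma Nonconstant.exists_threshold {P : Measure Ω} [IsProbabilityMeasure P] {X : Ω → ℝ}
    (hX : Integrable X P) (h : Nonconstant P X) :
    ∃ a, (∃ᵐ ω ∂P, a < X ω) ∧ (∃ᵐ ω ∂P, X ω ≤ a) := by
  refine ⟨∫ ω, X ω ∂P, fun hc => ?_, fun hc => ?_⟩
  · have h1 : ∀ᵐ ω ∂P, X ω ≤ ∫ ω, X ω ∂P := by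
      filter_upwards [hc] with ω hω using not_lt.1 hω
    refine h _ ((integral_eq_iff_of_ae_le hX (integrable_const _) h1).1 ?_)
    simp
  · have h1 : ∀ᵐ ω ∂P, ∫ ω, X ω ∂P ≤ X ω := by
      filter_upwards [hc] with ω hω using (not_le.1 hω).le
    refine h _ ((integral_eq_iff_of_ae_le (integrable_const _) hX h1).1 ?_).symm
    simp

/-- Chebyshev's association inequality, with strictness: integrate
`(X(ω) - X(ω')) * (Y(ω) - Y(ω')) ≥ 0` over `P ⊗ P`. -/
lemma chebyshev (P : Measure Ω) [IsProbabilityMeasure P] (X Y : Ω → ℝ)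
    (hX : Integrable X P) (hY : Integrable Y P) (hXY : Integrable (fun ω => X ω * Y ω) P)
    (N : Set Ω) (hN : ∀ᵐ ω ∂P, ω ∈ N)
    (hco : ∀ ω ∈ N, ∀ ω' ∈ N, 0 ≤ (X ω - X ω') * (Y ω - Y ω')) :
    (∫ ω, X ω ∂P) * (∫ ω, Y ω ∂P) ≤ ∫ ω, X ω * Y ω ∂P ∧
    (Nonconstant P X → Nonconstant P Y →
      (∫ ω, X ω ∂P) * (∫ ω, Y ω ∂P) < ∫ ω, X ω * Y ω ∂P) := by
  set f : Ω × Ω → ℝ := fun p => (X p.1 - X p.2) * (Y p.1 - Y p.2) with hf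
  have i1 : Integrable (fun p : Ω × Ω => X p.1 * Y p.1) (P.prod P) := hXY.comp_fst P
  have i2 : Integrable (fun p : Ω × Ω => X p.2 * Y p.2) (P.prod P) := hXY.comp_snd P
  have i3 : Integrable (fun p : Ω × Ω => X p.1 * Y p.2) (P.prod P) := hX.mul_prod hY
  have i4 : Integrable (fun p : Ω × Ω => Y p.1 * X p.2) (P.prod P) := hY.mul_prod hX
  have hfe : f = fun p => ((X p.1 * Y p.1 + X p.2 * Y p.2) - X p.1 * Y p.2) - Y p.1 * X p.2 := by
    funext p; simp only [hf]; ring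
  have hfi : Integrable f (P.prod P) := by
    rw [hfe]; exact ((i1.add i2).sub i3).sub i4
  have hint : ∫ p, f p ∂(P.prod P)
      = 2 * (∫ ω, X ω * Y ω ∂P - (∫ ω, X ω ∂P) * (∫ ω, Y ω ∂P)) := by
    have i5 : Integrable (fun p : Ω × Ω => X p.1 * Y p.1 + X p.2 * Y p.2) (P.prod P) := i1.add i2
    have i6 : Integrable (fun p : Ω × Ω => X p.1 * Y p.1 + X p.2 * Y p.2 - X p.1 * Y p.2)
        (P.prod P) := i5.sub i3
    rw [hfe, integral_sub i6 i4, integral_sub i5 i3,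
      integral_add i1 i2, integral_prod_mul, integral_prod_mul,
      integral_fun_fst (μ := P) (ν := P) (fun ω => X ω * Y ω),
      integral_fun_snd (μ := P) (ν := P) (fun ω => X ω * Y ω)]
    simp
    ring
  have hN1 : ∀ᵐ p ∂(P.prod P), p.1 ∈ N := Measure.quasiMeasurePreserving_fst.ae hN
  have hN2 : ∀ᵐ p ∂(P.prod P), p.2 ∈ N := Measure.quasiMeasurePreserving_snd.ae hN
  have hf0 : 0 ≤ᵐ[P.prod P] f := by
    filter_upwards [hN1, hN2] with p h1 h2 using hco _ h1 _ h2
  have hnn := integral_nonneg_of_ae hf0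
  refine ⟨by linarith, fun ncX ncY => ?_⟩
  by_contra hc
  have hz : ∫ p, f p ∂(P.prod P) = 0 := le_antisymm (by linarith) hnn
  rw [integral_eq_zero_iff_of_nonneg_ae hf0 hfi] at hz
  obtain ⟨a, ha1, ha2⟩ := ncX.exists_threshold hX
  obtain ⟨b, hb1, hb2⟩ := ncY.exists_threshold hY
  -- the superlevel sets of `X` and `Y` are nested on `N`
  have hnest : (∀ ω ∈ N, a < X ω → b < Y ω) ∨ (∀ ω ∈ N, b < Y ω → a < X ω) := by
    by_contra hcon
    push Not at hcon
    obtain ⟨⟨ω, hω, h1, h2⟩, ω', hω', h3, h4⟩ := hcon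
    have := hco ω hω ω' hω'
    nlinarith
  have hup : ∃ᵐ ω ∂P, a < X ω ∧ b < Y ω := by
    rcases hnest with h | h
    · exact (ha1.and_eventually hN).mono fun ω hω => ⟨hω.1, h ω hω.2 hω.1⟩
    · exact (hb1.and_eventually hN).mono fun ω hω => ⟨h ω hω.2 hω.1, hω.1⟩
  have hdown : ∃ᵐ ω ∂P, X ω ≤ a ∧ Y ω ≤ b := by
    rcases hnest with h | h
    · exact (hb2.and_eventually hN).mono fun ω hω =>
        ⟨not_lt.1 fun hlt => (h ω hω.2 hlt).not_ge hω.1, hω.1⟩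
    · exact (ha2.and_eventually hN).mono fun ω hω =>
        ⟨hω.1, not_lt.1 fun hlt => (h ω hω.2 hlt).not_ge hω.1⟩
  have hz2 : ∀ᵐ ω ∂P, ∀ᵐ ω' ∂P, f (ω, ω') = 0 := Measure.ae_ae_of_ae_prod hz
  obtain ⟨ω, ⟨h1, h2⟩, h3⟩ := (hup.and_eventually hz2).exists
  obtain ⟨ω', ⟨h4, h5⟩, h6⟩ := (hdown.and_eventually h3).exists
  simp only [hf] at h6
  have : 0 < (X ω - X ω') * (Y ω - Y ω') := mul_pos (by linarith) (by linarith)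
  linarith

lemma SameLaw.integral_eq {P : Measure Ω} {X X' : Ω → ℝ} (hX : Measurable X)
    (hX' : Measurable X') (h : SameLaw P X' X) : ∫ ω, X' ω ∂P = ∫ ω, X ω ∂P := by
  rw [← integral_map (φ := X') (f := fun x : ℝ => x) hX'.aemeasurable
      measurable_id.aestronglyMeasurable,
    ← integral_map (φ := X) (f := fun x : ℝ => x) hX.aemeasurable
      measurable_id.aestronglyMeasurable]
  rw [show Measure.map X' P = Measure.map X P from h]

lemma SameLaw.comp {P : Measure Ω} {X X' : Ω → ℝ} (hX : Measurable X)
    (hX' : Measurable X') (h : SameLaw P X' X) {g : ℝ → ℝ} (hg : Measurable g) :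
    SameLaw P (fun ω => g (X' ω)) (fun ω => g (X ω)) := by
  have h' : Measure.map X' P = Measure.map X P := h
  have := Measure.map_map (μ := P) hg hX'
  rw [h', Measure.map_map hg hX] at this
  exact this.symm

lemma SameLaw.nonconstant {P : Measure Ω} {X X' : Ω → ℝ} (hX : Measurable X)
    (hX' : Measurable X') (h : SameLaw P X' X) (hn : Nonconstant P X) : Nonconstant P X' := by
  intro c hc
  refine hn c ?_
  have h1 : ∀ᵐ x ∂(Measure.map X' P), x = c :=
    (ae_map_iff hX'.aemeasurable (measurableSet_singleton c)).2 hc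
  rw [show Measure.map X' P = Measure.map X P from h] at h1
  exact (ae_map_iff hX.aemeasurable (measurableSet_singleton c)).1 h1

/-- Some rearrangement of `X` is nonnegatively correlated with `Y`, and positively so if neither is
constant. -/
lemma exists_rearrangement (P : Measure Ω) [IsProbabilityMeasure P] (hP : IsAtomless P)
    (pr : PairedSpaces P) {X Y : Ω → ℝ} (hX : X ∈ pr.carrier) (hY : Y ∈ pr.dual) :
    ∃ X' ∈ pr.carrier, SameLaw P X' X ∧
      (∫ ω, X ω ∂P) * (∫ ω, Y ω ∂P) ≤ ∫ ω, X' ω * Y ω ∂P ∧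
      (Nonconstant P X → Nonconstant P Y →
        (∫ ω, X ω ∂P) * (∫ ω, Y ω ∂P) < ∫ ω, X' ω * Y ω ∂P) := by
  have hXm := pr.meas_carrier X hX
  obtain ⟨X', hX'm, hlaw, N, hN, hco⟩ :=
    exists_comonotone P hP X Y hXm (pr.meas_dual Y hY)
  have hX' := pr.lawinv_carrier X hX X' hX'm hlaw
  have := chebyshev P X' Y (pr.int_carrier _ hX') (pr.int_dual _ hY) (pr.mul_int _ hX' _ hY) N hN hco
  rw [hlaw.integral_eq hXm hX'm] at this
  exact ⟨X', hX', hlaw, this.1, fun h1 h2 => this.2 (hlaw.nonconstant hXm hX'm h1) h2⟩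

/-! ### Convex duality for the pairing `E[XY]` -/

/-- The primal space as a linear space. -/
def PairedSpaces.primal {P : Measure Ω} [IsProbabilityMeasure P] (pr : PairedSpaces P) :
    Submodule ℝ (Ω → ℝ) where
  carrier := pr.carrier
  add_mem' := fun {a b} ha hb => pr.add_carrier a ha b hb
  zero_mem' := pr.linf_carrier _ ⟨measurable_const, 0, by simp⟩
  smul_mem' := fun c x hx => pr.smul_carrier x hx c

/-- The dual space as a linear space. -/
def PairedSpaces.dualSpace {P : Measure Ω} [IsProbabilityMeasure P] (pr : PairedSpaces P) :
    Submodule ℝ (Ω → ℝ) where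
  carrier := pr.dual
  add_mem' := fun {a b} ha hb => pr.add_dual a ha b hb
  zero_mem' := pr.linf_dual _ ⟨measurable_const, 0, by simp⟩
  smul_mem' := fun c x hx => pr.smul_dual x hx c

/-- The pairing `(X, Y) ↦ E[XY]`. -/
def PairedSpaces.pairing {P : Measure Ω} [IsProbabilityMeasure P] (pr : PairedSpaces P) :
    pr.primal →ₗ[ℝ] pr.dualSpace →ₗ[ℝ] ℝ :=
  LinearMap.mk₂ ℝ (fun X Y => ∫ ω, (X : Ω → ℝ) ω * (Y : Ω → ℝ) ω ∂P)
    (fun X X' Y => by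
      rw [← integral_add (pr.mul_int _ X.2 _ Y.2) (pr.mul_int _ X'.2 _ Y.2)]
      simp [add_mul])
    (fun c X Y => by
      rw [smul_eq_mul, ← integral_const_mul]
      simp [mul_assoc])
    (fun X Y Y' => by
      rw [← integral_add (pr.mul_int _ X.2 _ Y.2) (pr.mul_int _ X.2 _ Y'.2)]
      simp [mul_add])
    (fun c X Y => by
      rw [smul_eq_mul, ← integral_const_mul]
      simp [mul_left_comm])

/-- The random variable underlying a point of the primal space with its weak topology. -/
def PairedSpaces.toRV {P : Measure Ω} [IsProbabilityMeasure P] (pr : PairedSpaces P)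
    (X : WeakBilin pr.pairing) : Ω → ℝ :=
  Subtype.val (p := fun x => x ∈ pr.primal) X

/-- An element of the primal space as a point of the primal space with its weak topology. -/
def PairedSpaces.ofRV {P : Measure Ω} [IsProbabilityMeasure P] (pr : PairedSpaces P)
    (X : Ω → ℝ) (hX : X ∈ pr.carrier) : WeakBilin pr.pairing :=
  (⟨X, hX⟩ : pr.primal)

lemma PairedSpaces.toRV_mem {P : Measure Ω} [IsProbabilityMeasure P] (pr : PairedSpaces P)
    (X : WeakBilin pr.pairing) : pr.toRV X ∈ pr.carrier :=
  Subtype.property (p := fun x => x ∈ pr.primal) X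

/-- `X ↦ E[XY] - K` is an affine minorant of `φ` on the primal space; equivalently,
`φ*(Y) ≤ K`. -/
def Minorant (P : Measure Ω) (pr : PairedSpaces P) (φ : (Ω → ℝ) → EReal) (Y : Ω → ℝ) (K : ℝ) :
    Prop :=
  ∀ X ∈ pr.carrier, ((∫ ω, X ω * Y ω ∂P - K : ℝ) : EReal) ≤ φ X

section FenchelMoreau

variable {P : Measure Ω} {pr : PairedSpaces P} {φ : (Ω → ℝ) → EReal}

/-- Hahn–Banach separation of `(X₀, m)` from the epigraph of `φ`. -/
lemma exists_separation_s6 [IsProbabilityMeasure P] (hconv : ConvexFn pr.carrier φ) (hlsc : WeakLSC P pr φ)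
    {X₀ : Ω → ℝ} (hX₀ : X₀ ∈ pr.carrier) {m : ℝ} (hm : (m : EReal) < φ X₀) :
    ∃ Y ∈ pr.dual, ∃ b u : ℝ, ∫ ω, X₀ ω * Y ω ∂P + b * m < u ∧
      ∀ X ∈ pr.carrier, ∀ r : ℝ, φ X ≤ r → u < ∫ ω, X ω * Y ω ∂P + b * r := by
  set epi : Set (WeakBilin pr.pairing × ℝ) := {p | φ (pr.toRV p.1) ≤ (p.2 : EReal)} with hepi
  have hclosed : IsClosed epi := by
    rw [← isOpen_compl_iff, isOpen_iff_mem_nhds]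
    rintro ⟨X, r⟩ hXr
    have hlt : (r : EReal) < φ (pr.toRV X) := not_le.1 hXr
    obtain ⟨s, hrs, hs⟩ := EReal.lt_iff_exists_real_btwn.1 hlt
    have hcl : IsClosed {X : WeakBilin pr.pairing | φ (pr.toRV X) ≤ (s : EReal)} := by
      have h := hlsc s
      have h2 : IsClosed {X : WeakBilin pr.pairing | pr.toRV X ∈
          {X | X ∈ pr.carrier ∧ φ X ≤ (s : EReal)}} := h
      convert h2 using 1
      ext X
      exact ⟨fun hX => ⟨(pr.toRV_mem X), hX⟩, fun hX => hX.2⟩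
    have h1 : {X : WeakBilin pr.pairing | φ (pr.toRV X) ≤ (s : EReal)}ᶜ ∈ nhds X :=
      hcl.isOpen_compl.mem_nhds (not_le.2 hs)
    have h2 : Set.Iio s ∈ nhds r := Iio_mem_nhds (EReal.coe_lt_coe_iff.1 hrs)
    filter_upwards [prod_mem_nhds h1 h2] with p hp hp2
    exact hp.1 (le_trans hp2 (EReal.coe_le_coe_iff.2 (le_of_lt hp.2)))
  have hcvx : Convex ℝ epi := by
    rintro ⟨X, r⟩ hX ⟨X', r'⟩ hX' a b ha hb hab
    have hb' : b = 1 - a := by linarith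
    subst hb'
    have h := hconv _ (pr.toRV_mem X) _ (pr.toRV_mem X') a ⟨ha, by linarith⟩
    change φ (fun ω => a * pr.toRV X ω + (1 - a) * pr.toRV X' ω)
      ≤ ((a * r + (1 - a) * r' : ℝ) : EReal)
    refine le_trans h ?_
    have hX1 : φ (pr.toRV X) ≤ (r : EReal) := hX
    have hX2 : φ (pr.toRV X') ≤ (r' : EReal) := hX'
    have e : (((a * r + (1 - a) * r' : ℝ)) : EReal)
        = (a : EReal) * (r : EReal) + ((1 - a : ℝ) : EReal) * (r' : EReal) := by
      rw [EReal.coe_add, EReal.coe_mul, EReal.coe_mul]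
    refine le_trans (add_le_add ?_ ?_) e.ge
    · exact mul_le_mul_of_nonneg_left hX1 (EReal.coe_nonneg.2 ha)
    · exact mul_le_mul_of_nonneg_left hX2 (EReal.coe_nonneg.2 hb)
  obtain ⟨f, u, hfu, hf⟩ := geometric_hahn_banach_point_closed
    (x := (pr.ofRV X₀ hX₀, m)) hcvx hclosed 
    (show ¬ φ X₀ ≤ (m : EReal) from not_le.2 hm)
  obtain ⟨Y, hY⟩ := LinearMap.dualEmbedding_surjective pr.pairing
    (f.comp (ContinuousLinearMap.inl ℝ (WeakBilin pr.pairing) ℝ))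
  have hdec : ∀ (X : WeakBilin pr.pairing) (r : ℝ), f (X, r) =
      ∫ ω, pr.toRV X ω * (Y : Ω → ℝ) ω ∂P + f (0, 1) * r := by
    intro X r
    have h1 : ((X, r) : WeakBilin pr.pairing × ℝ) = (X, 0) + r • ((0, 1) : WeakBilin pr.pairing × ℝ) := by simp
    rw [h1, map_add, map_smul, smul_eq_mul, mul_comm r]
    congr 1
    have := congrArg (fun g => g X) hY
    exact this.symm
  refine ⟨Y, Y.2, f (0, 1), u, ?_, fun X hX r hr => ?_⟩
  · rw [hdec] at hfu; exact hfu
  · have := hf (pr.ofRV X hX, r) hr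
    rw [hdec] at this; exact this

lemma Minorant.of_pos (hbot : ∀ X ∈ pr.carrier, φ X ≠ ⊥) {Y : Ω → ℝ} {b u : ℝ} (hb : 0 < b)
    (h : ∀ X ∈ pr.carrier, ∀ r : ℝ, φ X ≤ r → u < ∫ ω, X ω * Y ω ∂P + b * r) :
    Minorant P pr φ (fun ω => (-b⁻¹) * Y ω) (-(u / b)) := by
  intro X hX
  induction hx : φ X using EReal.rec with
  | bot => exact absurd hx (hbot X hX)
  | top => exact le_top
  | coe r =>
    have h1 := h X hX r hx.le
    rw [EReal.coe_le_coe_iff]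
    have h2 : ∫ ω, X ω * (-b⁻¹ * Y ω) ∂P = -b⁻¹ * ∫ ω, X ω * Y ω ∂P := by
      rw [← integral_const_mul]; congr 1; funext ω; ring
    rw [h2]
    have h3 : -b⁻¹ * (∫ ω, X ω * Y ω ∂P) - -(u / b) = (u - ∫ ω, X ω * Y ω ∂P) / b := by
      field_simp
      ring
    rw [h3, div_le_iff₀ hb]
    linarith

/-- A proper `φ` has an affine minorant: at a point of the domain the separating hyperplane cannot
be vertical. -/
lemma exists_minorant [IsProbabilityMeasure P] (hbot : ∀ X ∈ pr.carrier, φ X ≠ ⊥)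
    (hproper : ∃ X ∈ pr.carrier, φ X ≠ ⊤) (hconv : ConvexFn pr.carrier φ)
    (hlsc : WeakLSC P pr φ) : ∃ Y ∈ pr.dual, ∃ K, Minorant P pr φ Y K := by
  obtain ⟨X, hX, htop⟩ := hproper
  lift φ X to ℝ using ⟨htop, hbot X hX⟩ with r hr
  have hlt : ((r - 1 : ℝ) : EReal) < φ X := by
    rw [← hr, EReal.coe_lt_coe_iff]; linarith
  obtain ⟨Y, hY, b, u, h1, h2⟩ := exists_separation_s6 hconv hlsc hX hlt
  have h3 := h2 X hX r hr.ge
  have hb : 0 < b := by nlinarith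
  exact ⟨_, pr.smul_dual Y hY (-b⁻¹), _, Minorant.of_pos hbot hb h2⟩

/-- Fenchel–Moreau: `φ` is the supremum of its affine minorants. -/
lemma exists_minorant_gt [IsProbabilityMeasure P] (hbot : ∀ X ∈ pr.carrier, φ X ≠ ⊥)
    (hproper : ∃ X ∈ pr.carrier, φ X ≠ ⊤) (hconv : ConvexFn pr.carrier φ)
    (hlsc : WeakLSC P pr φ) {X₀ : Ω → ℝ} (hX₀ : X₀ ∈ pr.carrier) {m : ℝ}
    (hm : (m : EReal) < φ X₀) :
    ∃ Y ∈ pr.dual, ∃ K, Minorant P pr φ Y K ∧ m < ∫ ω, X₀ ω * Y ω ∂P - K := by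
  obtain ⟨Y, hY, b, u, h1, h2⟩ := exists_separation_s6 hconv hlsc hX₀ hm
  -- `b ≥ 0` because the epigraph is unbounded above
  have hb0 : 0 ≤ b := by
    obtain ⟨X, hX, htop⟩ := hproper
    lift φ X to ℝ using ⟨htop, hbot X hX⟩ with r hr
    by_contra hb
    rw [not_le] at hb
    set I := ∫ ω, X ω * Y ω ∂P
    have h3 := h2 X hX (max r ((u - I) / b)) (hr.ge.trans (EReal.coe_le_coe_iff.2 (le_max_left _ _)))
    have h4 : b * max r ((u - I) / b) ≤ b * ((u - I) / b) :=
      mul_le_mul_of_nonpos_left (le_max_right _ _) hb.le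
    rw [mul_div_cancel₀ _ hb.ne] at h4
    linarith
  rcases hb0.eq_or_lt with rfl | hb
  · -- a vertical hyperplane: tilt a fixed affine minorant far enough along it
    obtain ⟨Y₁, hY₁, K, hK⟩ := exists_minorant hbot hproper hconv hlsc
    simp only [zero_mul, add_zero] at h1 h2
    set I := ∫ ω, X₀ ω * Y ω ∂P
    set J := ∫ ω, X₀ ω * Y₁ ω ∂P
    have hlam : ∃ l : ℝ, 0 ≤ l ∧ m < J - K + l * (u - I) := by
      have hpos : 0 < u - I := by linarith
      refine ⟨(|m - (J - K)| + 1) / (u - I), by positivity, ?_⟩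
      rw [div_mul_cancel₀ _ hpos.ne']
      linarith [le_abs_self (m - (J - K))]
    obtain ⟨l, hl, hlm⟩ := hlam
    have hint : ∀ X ∈ pr.carrier, ∫ ω, X ω * (Y₁ ω + -l * Y ω) ∂P
        = ∫ ω, X ω * Y₁ ω ∂P - l * ∫ ω, X ω * Y ω ∂P := by
      intro X hX
      rw [← integral_const_mul, ← integral_sub (pr.mul_int X hX Y₁ hY₁)
        ((pr.mul_int X hX Y hY).const_mul l)]
      congr 1; funext ω; ring
    refine ⟨_, pr.add_dual Y₁ hY₁ _ (pr.smul_dual Y hY (-l)), K - l * u, fun X hX => ?_, ?_⟩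
    · rw [hint X hX]
      induction hx : φ X using EReal.rec with
      | bot => exact absurd hx (hbot X hX)
      | top => exact le_top
      | coe r =>
        have h3 := hK X hX
        have h4 := h2 X hX r hx.le
        rw [hx, EReal.coe_le_coe_iff] at h3
        rw [EReal.coe_le_coe_iff]
        nlinarith
    · rw [hint X₀ hX₀]
      change m < J - l * I - (K - l * u)
      linarith
  · refine ⟨_, pr.smul_dual Y hY (-b⁻¹), _, Minorant.of_pos hbot hb h2, ?_⟩
    have h3 : ∫ ω, X₀ ω * (-b⁻¹ * Y ω) ∂P = -b⁻¹ * ∫ ω, X₀ ω * Y ω ∂P := by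
      rw [← integral_const_mul]; congr 1; funext ω; ring
    have h4 : -b⁻¹ * (∫ ω, X₀ ω * Y ω ∂P) - -(u / b) = (u - ∫ ω, X₀ ω * Y ω ∂P) / b := by
      field_simp
      ring
    rw [h3, h4, lt_div_iff₀ hb]
    linarith

/-- Comparing the values of all affine minorants at two points compares the values of `φ`. -/
lemma le_of_minorants [IsProbabilityMeasure P] (hbot : ∀ X ∈ pr.carrier, φ X ≠ ⊥)
    (hproper : ∃ X ∈ pr.carrier, φ X ≠ ⊤) (hconv : ConvexFn pr.carrier φ)
    (hlsc : WeakLSC P pr φ) {X₀ : Ω → ℝ} (hX₀ : X₀ ∈ pr.carrier) {c : EReal}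
    (h : ∀ Y ∈ pr.dual, ∀ K, Minorant P pr φ Y K →
      ((∫ ω, X₀ ω * Y ω ∂P - K : ℝ) : EReal) ≤ c) : φ X₀ ≤ c := by
  by_contra hc
  obtain ⟨m, hm1, hm2⟩ := EReal.lt_iff_exists_real_btwn.1 (not_le.1 hc)
  obtain ⟨Y, hY, K, hK, hlt⟩ := exists_minorant_gt hbot hproper hconv hlsc hX₀ hm2
  exact absurd (hm1.trans (EReal.coe_lt_coe_iff.2 hlt)) (not_lt.2 (h Y hY K hK))

/-- The domain of the conjugate consists of the slopes of affine minorants. -/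
lemma conj_lt_top_iff (hbot : ∀ X ∈ pr.carrier, φ X ≠ ⊥) (Y : Ω → ℝ) :
    conj P pr.carrier φ Y < ⊤ ↔ ∃ K, Minorant P pr φ Y K := by
  have key : ∀ K : ℝ, conj P pr.carrier φ Y ≤ K ↔ Minorant P pr φ Y K := by
    intro K
    simp only [conj, iSup_le_iff, Minorant]
    refine forall_congr' fun X => forall_congr' fun hX => ?_
    induction hx : φ X using EReal.rec with
    | bot => exact absurd hx (hbot X hX)
    | top => simp
    | coe r =>
      rw [← EReal.coe_sub, EReal.coe_le_coe_iff, EReal.coe_le_coe_iff]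
      constructor <;> intro h <;> linarith
  constructor
  · intro h
    obtain ⟨K, hK, -⟩ := EReal.lt_iff_exists_real_btwn.1 h
    exact ⟨K, (key K).1 hK.le⟩
  · rintro ⟨K, hK⟩
    exact ((key K).2 hK).trans_lt (EReal.coe_lt_top K)

end FenchelMoreau

/-! ### Directions of recession and the collapse to the mean -/

lemma PairedSpaces.add_smul_mem {P : Measure Ω} (pr : PairedSpaces P) {X Z : Ω → ℝ}
    (hX : X ∈ pr.carrier) (hZ : Z ∈ pr.carrier) (t : ℝ) :
    (fun ω => X ω + t * Z ω) ∈ pr.carrier :=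
  pr.add_carrier X hX _ (pr.smul_carrier Z hZ t)

lemma PairedSpaces.const_mem {P : Measure Ω} (pr : PairedSpaces P) (c : ℝ) :
    (fun _ => c) ∈ pr.carrier :=
  pr.linf_carrier _ ⟨measurable_const, |c|, by simp⟩

lemma PairedSpaces.integral_add_smul {P : Measure Ω} (pr : PairedSpaces P) {X Z Y : Ω → ℝ}
    (hX : X ∈ pr.carrier) (hZ : Z ∈ pr.carrier) (hY : Y ∈ pr.dual) (t : ℝ) :
    ∫ ω, (X ω + t * Z ω) * Y ω ∂P = ∫ ω, X ω * Y ω ∂P + t * ∫ ω, Z ω * Y ω ∂P := by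
  rw [← integral_const_mul, ← integral_add (pr.mul_int X hX Y hY)
    ((pr.mul_int Z hZ Y hY).const_mul t)]
  congr 1; funext ω; ring

lemma exists_nonconstant (P : Measure Ω) [IsProbabilityMeasure P] (hP : IsAtomless P)
    (pr : PairedSpaces P) :
    ∃ Z ∈ pr.carrier, Nonconstant P Z ∧ ∫ ω, Z ω ∂P = 0 := by
  obtain ⟨B, hB, -, h0, h1⟩ := hP Set.univ MeasurableSet.univ (by simp)
  rw [measure_univ] at h1
  have hmem : MemLinf P (B.indicator (1 : Ω → ℝ)) := by
    refine ⟨measurable_one.indicator hB, 1, ae_of_all _ fun ω => ?_⟩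
    by_cases h : ω ∈ B <;> simp [h]
  have hI := pr.linf_carrier _ hmem
  have hin : ∃ᵐ ω ∂P, ω ∈ B := frequently_ae_mem_iff.2 h0.ne'
  have hout : ∃ᵐ ω ∂P, ω ∈ Bᶜ := by
    refine frequently_ae_mem_iff.2 ?_
    rw [prob_compl_eq_one_sub hB]
    exact (tsub_pos_of_lt h1).ne'
  refine ⟨_, pr.add_carrier _ hI _ (pr.const_mem (-(∫ ω, B.indicator (1 : Ω → ℝ) ω ∂P))), ?_, ?_⟩
  · intro c hc
    obtain ⟨ω, hω, e⟩ := (hin.and_eventually hc).exists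
    obtain ⟨ω', hω', e'⟩ := (hout.and_eventually hc).exists
    have hω'' : ω' ∉ B := hω'
    simp only [Set.indicator_of_mem hω, Set.indicator_of_notMem hω'', Pi.one_apply] at e e'
    linarith
  · rw [integral_add (pr.int_carrier _ hI) (integrable_const _)]
    simp

section Recession

variable {P : Measure Ω} {pr : PairedSpaces P} {φ : (Ω → ℝ) → EReal}

lemma Minorant.slope_nonpos (hbot : ∀ X ∈ pr.carrier, φ X ≠ ⊥) {X Z Y : Ω → ℝ} {K : ℝ}
    (hY : Y ∈ pr.dual) (hK : Minorant P pr φ Y K) (hX : X ∈ pr.carrier) (htop : φ X ≠ ⊤)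
    (hZ : Z ∈ pr.carrier)
    (h : ∀ t : ℝ, 0 ≤ t → φ (fun ω => X ω + t * Z ω) ≤ φ X) : ∫ ω, Z ω * Y ω ∂P ≤ 0 := by
  lift φ X to ℝ using ⟨htop, hbot X hX⟩ with r hr
  by_contra hpos
  rw [not_le] at hpos
  set I := ∫ ω, X ω * Y ω ∂P with hI
  set J := ∫ ω, Z ω * Y ω ∂P with hJ
  have h1 := (hK _ (pr.add_smul_mem hX hZ ((|r - I + K| + 1) / J))).trans (h _ (by positivity))
  rw [pr.integral_add_smul hX hZ hY, EReal.coe_le_coe_iff, ← hI, ← hJ,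
    div_mul_cancel₀ _ hpos.ne'] at h1
  linarith [le_abs_self (r - I + K)]

/-- Replacing `X` by its mean does not increase `φ`. An affine minorant with slope `Y` takes, at a
rearrangement of `X` comonotone with `Y`, at least its value at `E[X]`. -/
lemma le_of_mean [IsProbabilityMeasure P] (hP : IsAtomless P) (hbot : ∀ X ∈ pr.carrier, φ X ≠ ⊥)
    (hproper : ∃ X ∈ pr.carrier, φ X ≠ ⊤) (hconv : ConvexFn pr.carrier φ)
    (hlsc : WeakLSC P pr φ) (hlaw : LawInvariantFn P pr.carrier φ) {X : Ω → ℝ}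
    (hX : X ∈ pr.carrier) : φ (fun _ => ∫ ω, X ω ∂P) ≤ φ X := by
  refine le_of_minorants hbot hproper hconv hlsc (pr.const_mem _) fun Y hY K hK => ?_
  obtain ⟨X', hX', hs, hle, -⟩ := exists_rearrangement P hP pr hX hY
  refine le_trans ?_ ((hK X' hX').trans (hlaw X' hX' X hX hs).le)
  rw [EReal.coe_le_coe_iff, integral_const_mul]
  linarith

/-- A nonconstant centred direction of recession at one point of the domain forces every slope `Y`
of an affine minorant to be constant. -/
lemma const_of_recession [IsProbabilityMeasure P] (hP : IsAtomless P)
    (hbot : ∀ X ∈ pr.carrier, φ X ≠ ⊥)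
    (hproper : ∃ X ∈ pr.carrier, φ X ≠ ⊤) (hconv : ConvexFn pr.carrier φ)
    (hlsc : WeakLSC P pr φ) (hlaw : LawInvariantFn P pr.carrier φ) {X Z Y : Ω → ℝ} {K : ℝ}
    (hX : X ∈ pr.carrier) (htop : φ X ≠ ⊤) (hZ : Z ∈ pr.carrier) (hZn : Nonconstant P Z)
    (hZ0 : ∫ ω, Z ω ∂P = 0) (h : ∀ t : ℝ, 0 ≤ t → φ (fun ω => X ω + t * Z ω) ≤ φ X)
    (hY : Y ∈ pr.dual) (hK : Minorant P pr φ Y K) : ∃ c : ℝ, Y =ᵐ[P] fun _ => c := by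
  by_contra hYn
  have hYn' : Nonconstant P Y := fun c hc => hYn ⟨c, hc⟩
  set c := ∫ ω, X ω ∂P with hc
  have hcm := pr.const_mem c
  have hctop : φ (fun _ => c) ≠ ⊤ :=
    ((le_of_mean hP hbot hproper hconv hlsc hlaw hX).trans_lt (lt_top_iff_ne_top.2 htop)).ne
  -- recession directions do not depend on the base point, so the base may be taken constant
  have hrec : ∀ t : ℝ, 0 ≤ t → φ (fun ω => c + t * Z ω) ≤ φ (fun _ => c) := by
    intro t ht
    refine le_of_minorants hbot hproper hconv hlsc (pr.add_smul_mem hcm hZ t)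
      fun Y₁ hY₁ K₁ hK₁ => le_trans ?_ (hK₁ _ hcm)
    have h1 := hK₁.slope_nonpos hbot hY₁ hX htop hZ h
    rw [EReal.coe_le_coe_iff, pr.integral_add_smul hcm hZ hY₁]
    linarith [mul_nonpos_of_nonneg_of_nonpos ht h1]
  obtain ⟨Z', hZ', hs, -, hlt⟩ := exists_rearrangement P hP pr hZ hY
  -- at a constant base point, rearranging the direction does not change the law
  have hrec' : ∀ t : ℝ, 0 ≤ t → φ (fun ω => c + t * Z' ω) ≤ φ (fun _ => c) := by
    intro t ht
    have hs' : SameLaw P (fun ω => c + t * Z' ω) (fun ω => c + t * Z ω) :=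
      hs.comp (pr.meas_carrier _ hZ) (pr.meas_carrier _ hZ')
        (g := fun x => c + t * x) (by fun_prop)
    rw [hlaw _ (pr.add_smul_mem hcm hZ' t) _ (pr.add_smul_mem hcm hZ t) hs']
    exact hrec t ht
  have h1 := hK.slope_nonpos hbot hY hcm hctop hZ' hrec'
  have h2 := hlt hZn hYn'
  rw [hZ0, zero_mul] at h2
  exact absurd h2 (not_lt.2 h1)

end Recession

/-- collapse to the mean for proper, convex, `σ(𝒳,𝒳*)`-lower semicontinuous,
law-invariant functionals: seven equivalent conditions. -/
theorem collapse_convex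
    (P : Measure Ω) [IsProbabilityMeasure P] (hP : IsAtomless P)
    (pr : PairedSpaces P) (φ : (Ω → ℝ) → EReal)
    (hbot : ∀ X ∈ pr.carrier, φ X ≠ (⊥ : EReal))
    (hproper : ∃ X ∈ pr.carrier, φ X ≠ (⊤ : EReal))
    (hconv : ConvexFn pr.carrier φ)
    (hlsc : WeakLSC P pr φ)
    (hlaw : LawInvariantFn P pr.carrier φ) :
    [ ExpectationInvariantFn P pr.carrier φ,
      (∃ S : Set (ℝ × ℝ), S.Nonempty ∧ ∀ X ∈ pr.carrier,
        φ X = ⨆ q ∈ S, ((q.1 * (∫ ω, X ω ∂P) + q.2 : ℝ) : EReal)),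
      (∃ Z ∈ pr.carrier, Nonconstant P Z ∧ (∫ ω, Z ω ∂P) = 0 ∧
        ∀ X ∈ pr.carrier, ∀ t : ℝ, φ (fun ω => X ω + t * Z ω) = φ X),
      (∃ a : ℝ, ∃ Z ∈ pr.carrier, Nonconstant P Z ∧ (∫ ω, Z ω ∂P) = 0 ∧
        ∀ X ∈ pr.carrier, ∀ t : ℝ,
          φ (fun ω => X ω + t * Z ω) = φ X + ((a * t : ℝ) : EReal)),
      (∀ X ∈ pr.carrier, ∃ Z ∈ pr.carrier, Nonconstant P Z ∧ (∫ ω, Z ω ∂P) = 0 ∧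
        ∀ t : ℝ, 0 ≤ t → φ (fun ω => X ω + t * Z ω) ≤ φ X),
      (∃ X ∈ pr.carrier, φ X ≠ (⊤ : EReal) ∧
        ∃ Z ∈ pr.carrier, Nonconstant P Z ∧ (∫ ω, Z ω ∂P) = 0 ∧
        ∀ t : ℝ, 0 ≤ t → φ (fun ω => X ω + t * Z ω) ≤ φ X),
      (∀ Y ∈ pr.dual, conj P pr.carrier φ Y < (⊤ : EReal) →
        ∃ c : ℝ, Y =ᵐ[P] fun _ => c) ].TFAE := by
  tfae_have 1 → 3 := by
    intro h
    obtain ⟨Z, hZ, hn, h0⟩ := exists_nonconstant P hP pr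
    refine ⟨Z, hZ, hn, h0, fun X hX t => h _ (pr.add_smul_mem hX hZ t) X hX ?_⟩
    rw [integral_add (pr.int_carrier X hX) ((pr.int_carrier Z hZ).const_mul t),
      integral_const_mul, h0, mul_zero, add_zero]
  tfae_have 3 → 4 := by
    rintro ⟨Z, hZ, hn, h0, h⟩
    exact ⟨0, Z, hZ, hn, h0, fun X hX t => by simp [h X hX t]⟩
  tfae_have 3 → 5 := by
    rintro ⟨Z, hZ, hn, h0, h⟩ X hX
    exact ⟨Z, hZ, hn, h0, fun t _ => (h X hX t).le⟩
  tfae_have 5 → 6 := by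
    intro h
    obtain ⟨X, hX, htop⟩ := hproper
    exact ⟨X, hX, htop, h X hX⟩
  tfae_have 4 → 6 := by
    rintro ⟨a, Z, hZ, hn, h0, h⟩
    obtain ⟨X, hX, htop⟩ := hproper
    have hdrop : ∀ x : EReal, ∀ s : ℝ, s ≤ 0 → x + (s : EReal) ≤ x := fun x s hs => by
      calc x + (s : EReal) ≤ x + 0 := by gcongr; exact_mod_cast hs
        _ = x := add_zero x
    rcases le_total a 0 with ha | ha
    · refine ⟨X, hX, htop, Z, hZ, hn, h0, fun t ht => ?_⟩
      rw [h X hX t]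
      exact hdrop _ _ (mul_nonpos_of_nonpos_of_nonneg ha ht)
    · refine ⟨X, hX, htop, _, pr.smul_carrier Z hZ (-1), ?_, ?_, fun t ht => ?_⟩
      · intro c hc
        refine hn (-c) ?_
        filter_upwards [hc] with ω hω
        linarith
      · rw [integral_const_mul, h0, mul_zero]
      · have e : (fun ω => X ω + t * (-1 * Z ω)) = fun ω => X ω + (-t) * Z ω := by
          funext ω; ring
        rw [e, h X hX (-t)]
        exact hdrop _ _ (mul_nonpos_of_nonneg_of_nonpos ha (by linarith))
  tfae_have 6 → 7 := by
    rintro ⟨X, hX, htop, Z, hZ, hn, h0, h⟩ Y hY hYt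
    obtain ⟨K, hK⟩ := (conj_lt_top_iff hbot Y).1 hYt
    exact const_of_recession hP hbot hproper hconv hlsc hlaw hX htop hZ hn h0 h hY hK
  tfae_have 7 → 2 := by
    intro h
    -- an affine minorant with slope a.s. equal to `c` is an affine function of the mean
    have hc : ∀ Y ∈ pr.dual, ∀ K, Minorant P pr φ Y K → ∃ c : ℝ, ∀ X : Ω → ℝ,
        ∫ ω, X ω * Y ω ∂P - K = c * (∫ ω, X ω ∂P) + -K := by
      intro Y hY K hK
      obtain ⟨c, hc⟩ := h Y hY ((conj_lt_top_iff hbot Y).2 ⟨K, hK⟩)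
      refine ⟨c, fun X => ?_⟩
      rw [← integral_const_mul, sub_eq_add_neg]
      congr 1
      refine integral_congr_ae ?_
      filter_upwards [hc] with ω hω
      rw [hω, mul_comm]
    refine ⟨{q | ∀ X ∈ pr.carrier, ((q.1 * (∫ ω, X ω ∂P) + q.2 : ℝ) : EReal) ≤ φ X}, ?_, ?_⟩
    · obtain ⟨Y, hY, K, hK⟩ := exists_minorant hbot hproper hconv hlsc
      obtain ⟨c, hcX⟩ := hc Y hY K hK
      exact ⟨(c, -K), fun X hX => by rw [← hcX X]; exact hK X hX⟩
    · intro X hX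
      refine le_antisymm ?_ (iSup₂_le fun q hq => hq X hX)
      refine le_of_minorants hbot hproper hconv hlsc hX fun Y hY K hK => ?_
      obtain ⟨c, hcX⟩ := hc Y hY K hK
      rw [hcX X]
      exact le_iSup₂_of_le (c, -K) (fun X hX => by rw [← hcX X]; exact hK X hX) le_rfl
  tfae_have 2 → 1 := by
    rintro ⟨S, -, hS⟩ X hX Y hY hXY
    rw [hS X hX, hS Y hY, hXY]
  tfae_finish

end Collapse
end
end
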